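/- arXiv:2405.14914 — 3 statements merged into one kernel-verified Lean document; each statement's English description precedes it below -/
import Mathlib

section
/- Let Q be a finite quiver, α ≥ 1, r ∈ ℕ^{Q₀}, λ ∈ ℤ^{Q₀}, and let 𝔽_q be a finite field of characteristic p > Σ_i |λ_i| r_i; set R := 𝔽_q[t]/(t^α). Let x be a locally free representation of rank r over R. Then there exists y with μ(x,y) = (t^{α−1} λ_i · Id_{r_i})_{i∈Q₀} if and only if every rank vector r' of a direct summand of x satisfies Σ_i λ_i r'_i = 0 (as an equality of integers). -/
/-- A finite quiver (equivalently, a finite multigraph with a chosen orientation of each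
edge): finitely many vertices and arrows, with source and target maps. -/
structure FinQuiver where
  V : Type
  E : Type
  [fintypeV : Fintype V]
  [fintypeE : Fintype E]
  [decEqV : DecidableEq V]
  s : E → V
  t : E → V

attribute [instance] FinQuiver.fintypeV FinQuiver.fintypeE FinQuiver.decEqV

namespace FinQuiver

/-- The adjacency (simple) graph of the underlying multigraph: two vertices are adjacent
if some edge joins them.  Connectivity of the multigraph only depends on this graph. -/
def adjGraph (G : FinQuiver) : SimpleGraph G.V :=
  SimpleGraph.fromRel fun a b => ∃ e : G.E, G.s e = a ∧ G.t e = b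

/-- The number of connected components of the underlying multigraph. -/
noncomputable def c (G : FinQuiver) : ℕ :=
  Nat.card G.adjGraph.ConnectedComponent

/-- The Betti number `b(Q) = c(Q) - #Q₀ + #Q₁` of the underlying multigraph. -/
noncomputable def betti (G : FinQuiver) : ℤ :=
  (G.c : ℤ) - Fintype.card G.V + Fintype.card G.E

/-- The underlying multigraph is connected. -/
def Connected (G : FinQuiver) : Prop := G.adjGraph.Connected

/-- Deletion of the edge `e`. -/
noncomputable def deleteEdge (G : FinQuiver) (e : G.E) : FinQuiver :=
  letI : DecidableEq G.E := Classical.decEq _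
  { V := G.V, E := {e' : G.E // e' ≠ e}, s := fun e' => G.s e'.1, t := fun e' => G.t e'.1 }

/-- The underlying multigraph is 2-connected: it is connected and stays connected after
deleting any single edge. -/
def TwoConnected (G : FinQuiver) : Prop :=
  G.Connected ∧ ∀ e : G.E, (G.deleteEdge e).Connected

/-- Restriction `Q|_I` to a subset `I` of the vertices (full sub(multi)graph). -/
noncomputable def restrictV (G : FinQuiver) (I : Set G.V) : FinQuiver :=
  letI : DecidablePred (· ∈ I) := Classical.decPred _
  { V := ↥I
    E := {e : G.E // G.s e ∈ I ∧ G.t e ∈ I}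
    s := fun e => ⟨G.s e.1, e.2.1⟩
    t := fun e => ⟨G.t e.1, e.2.2⟩ }

/-- Restriction `Q|_J` to a subset `J` of the edges (keeping all vertices). -/
noncomputable def restrictE (G : FinQuiver) (J : Set G.E) : FinQuiver :=
  letI : DecidablePred (· ∈ J) := Classical.decPred _
  { V := G.V
    E := ↥J
    s := fun e => G.s e.1
    t := fun e => G.t e.1 }

end FinQuiver

/-- The ring of truncated polynomials `F[t]/(t^α)`. -/
abbrev TruncRing (F : Type) [CommRing F] (α : ℕ) : Type :=
  Polynomial F ⧸ Ideal.span {(Polynomial.X : Polynomial F) ^ α}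

/-- The image of `t` in `F[t]/(t^α)`. -/
noncomputable def tvar (F : Type) [CommRing F] (α : ℕ) : TruncRing F α :=
  Ideal.Quotient.mk _ (Polynomial.X : Polynomial F)
/-- A locally free representation of rank `r` of the quiver `G` over `R`: a matrix
`x_a` of size `r_{t(a)} × r_{s(a)}` for every arrow `a`. -/
abbrev QRep (G : FinQuiver) (R : Type) [CommRing R] (r : G.V → ℕ) : Type :=
  ∀ a : G.E, Matrix (Fin (r (G.t a))) (Fin (r (G.s a))) R

/-- The second component of a pair in the doubled quiver: a matrix `y_a` of size
`r_{s(a)} × r_{t(a)}` for every arrow `a`. -/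
abbrev QCoRep (G : FinQuiver) (R : Type) [CommRing R] (r : G.V → ℕ) : Type :=
  ∀ a : G.E, Matrix (Fin (r (G.s a))) (Fin (r (G.t a))) R

/-- The moment map of the quiver `G`:
`μ(x,y)_i := Σ_{a : t(a)=i} x_a y_a − Σ_{a : s(a)=i} y_a x_a`. -/
noncomputable def momentMap (G : FinQuiver) {R : Type} [CommRing R] {r : G.V → ℕ}
    (x : QRep G R r) (y : QCoRep G R r) (i : G.V) : Matrix (Fin (r i)) (Fin (r i)) R :=
  (∑ a : G.E, if h : G.t a = i then
      cast (congrArg (fun v => Matrix (Fin (r v)) (Fin (r v)) R) h) (x a * y a) else 0)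
  - ∑ a : G.E, if h : G.s a = i then
      cast (congrArg (fun v => Matrix (Fin (r v)) (Fin (r v)) R) h) (y a * x a) else 0

/-- The Euler form `⟨r,r'⟩ := Σ_{i∈Q₀} r_i r'_i − Σ_{a∈Q₁} r_{s(a)} r'_{t(a)}` of `G`. -/
def eulerForm (G : FinQuiver) (r r' : G.V → ℕ) : ℤ :=
  ∑ i : G.V, (r i : ℤ) * (r' i : ℤ) - ∑ a : G.E, (r (G.s a) : ℤ) * (r' (G.t a) : ℤ)

/-- The change-of-basis action of `GL_{α,r} = ∏_i GL_{r_i}(R)` on representations: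
`(g·x)_a := g_{t(a)} x_a g_{s(a)}⁻¹`. -/
def glAct (G : FinQuiver) {R : Type} [CommRing R] {r : G.V → ℕ}
    (g : ∀ i : G.V, (Matrix (Fin (r i)) (Fin (r i)) R)ˣ) (x : QRep G R r) : QRep G R r :=
  fun a => (g (G.t a) : Matrix (Fin (r (G.t a))) (Fin (r (G.t a))) R) * x a *
    (((g (G.s a))⁻¹ : (Matrix (Fin (r (G.s a))) (Fin (r (G.s a))) R)ˣ) :
      Matrix (Fin (r (G.s a))) (Fin (r (G.s a))) R)

/-- `A` is block-diagonal for the splittings `m = m' + (m − m')`, `n = n' + (n − n')`: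
all entries `A k l` with `(k < m') ↮ (l < n')` vanish. -/
def IsBlockDiag {R : Type} [CommRing R] {m n : ℕ} (m' n' : ℕ)
    (A : Matrix (Fin m) (Fin n) R) : Prop :=
  ∀ (k : Fin m) (l : Fin n), ¬ ((k : ℕ) < m' ↔ (l : ℕ) < n') → A k l = 0

/-- `r'` is the rank vector of a direct summand of the representation `x`: for some
complementary rank vector `r''` with `r' + r'' = r`, some change of basis `g` makes all
matrices of `x` block-diagonal with diagonal blocks of sizes prescribed by `r'`, `r''`.
(In particular `r' = 0` and `r' = r` always qualify.) -/
def IsSummandRank (G : FinQuiver) {R : Type} [CommRing R] {r : G.V → ℕ}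
    (x : QRep G R r) (r' : G.V → ℕ) : Prop :=
  ∃ r'' : G.V → ℕ, (∀ i, r' i + r'' i = r i) ∧
    ∃ g : ∀ i : G.V, (Matrix (Fin (r i)) (Fin (r i)) R)ˣ,
      ∀ a : G.E, IsBlockDiag (r' (G.t a)) (r' (G.s a)) (glAct G g x a)

/-- `x` is decomposable: it is a direct sum of two representations of nonzero ranks. -/
def Decomposable (G : FinQuiver) {R : Type} [CommRing R] {r : G.V → ℕ}
    (x : QRep G R r) : Prop :=
  ∃ r' r'' : G.V → ℕ, (∀ i, r' i + r'' i = r i) ∧ r' ≠ 0 ∧ r'' ≠ 0 ∧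
    ∃ g : ∀ i : G.V, (Matrix (Fin (r i)) (Fin (r i)) R)ˣ,
      ∀ a : G.E, IsBlockDiag (r' (G.t a)) (r' (G.s a)) (glAct G g x a)

/-! Let `(R, 𝔪)` be a self-injective Artinian local ring with socle `τR`. Under the trace pairing
the image of `y ↦ μ(x, y)` is exactly the annihilator of `End(x)`, so `μ(x, y) = (τ λ_i)` is
solvable iff `Σ λ_i tr(e_i)` vanishes modulo `𝔪` for every `e ∈ End(x)`.

A direct summand is given by an idempotent of `End(x)`, whose trace at `i` is the rank `r'_i`; this
is one implication. Conversely let `e ∈ End(x)`. For every monic irreducible `P` over `R / 𝔪`, the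
commutative algebra `R[e]` contains an idempotent that reduces modulo `𝔪` to the projector onto the
`P`-primary part of `e`, so the ranks `mult_P(χ(e_i)) deg P` form the rank vector of a summand. The
hypothesis on summands thus kills `Σ λ_i mult_P(χ(e_i))` for every `P`, and therefore the weighted
sum of the traces. -/

section SelfInjective

variable {R : Type*} [CommRing R] [IsLocalRing R] [Module.Injective R R]
  {M : Type*} [AddCommGroup M] [Module R M] {τ : R}

theorem exists_linearMap_apply_eq_of_ne_zero
    (hτ : ∀ a ∈ IsLocalRing.maximalIdeal R, a * τ = 0) {m : M} (hm : m ≠ 0) :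
    ∃ φ : M →ₗ[R] R, φ m = τ := by
  let f := LinearMap.toSpanSingleton R M m
  have hker : f.ker ≤ (LinearMap.toSpanSingleton R R τ).ker := by
    intro a ha
    refine hτ a ((IsLocalRing.mem_maximalIdeal a).mpr fun hu => hm ?_)
    exact (hu.smul_eq_zero).mp ha
  obtain ⟨φ, hφ⟩ := Module.Injective.extension_property R R (R ⧸ f.ker) M (f.ker.liftQ f le_rfl)
    (LinearMap.ker_eq_bot.mp (Submodule.ker_liftQ_eq_bot' _ f rfl)) (f.ker.liftQ _ hker)
  refine ⟨φ, ?_⟩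
  have h1 := LinearMap.congr_fun hφ (Submodule.Quotient.mk 1)
  simpa only [LinearMap.comp_apply, Submodule.liftQ_apply, f, LinearMap.toSpanSingleton_apply,
    one_smul] using h1

theorem exists_linearMap_le_ker_of_notMem
    (hτ : ∀ a ∈ IsLocalRing.maximalIdeal R, a * τ = 0) {N : Submodule R M} {m : M} (hm : m ∉ N) :
    ∃ φ : M →ₗ[R] R, N ≤ φ.ker ∧ φ m = τ := by
  obtain ⟨φ, hφ⟩ := exists_linearMap_apply_eq_of_ne_zero hτ
    ((Submodule.Quotient.mk_eq_zero N).not.mpr hm)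
  refine ⟨φ ∘ₗ N.mkQ, fun n hn => ?_, hφ⟩
  rw [LinearMap.mem_ker, LinearMap.comp_apply, N.mkQ_apply,
    (Submodule.Quotient.mk_eq_zero N).mpr hn, map_zero]

end SelfInjective

section PrincipalQuotient

variable {D : Type*} [CommRing D] [IsDomain D]

theorem injective_quotient_span_singleton [IsPrincipalIdealRing D] {n : D} (hn : n ≠ 0) :
    Module.Injective (D ⧸ Ideal.span {n}) (D ⧸ Ideal.span {n}) := by
  refine Module.Baer.injective fun I g => ?_
  let π : D →+* D ⧸ Ideal.span {n} := Ideal.Quotient.mk (Ideal.span {n})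
  have hπ {w : D} : π w = 0 ↔ n ∣ w := Ideal.Quotient.eq_zero_iff_dvd n w
  obtain ⟨d, hd : I.comap π = Ideal.span {d}⟩ := IsPrincipalIdealRing.principal (I.comap π)
  have hmem {w : D} : π w ∈ I ↔ d ∣ w := by
    rw [← Ideal.mem_comap, hd, Ideal.mem_span_singleton]
  obtain ⟨m, rfl⟩ : d ∣ n := hmem.mp (hπ.mpr dvd_rfl ▸ I.zero_mem)
  obtain ⟨c, hc⟩ := Ideal.Quotient.mk_surjective (g ⟨π d, hmem.mpr dvd_rfl⟩)
  obtain ⟨b, rfl⟩ : d ∣ c := by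
    have hmc : π (m * c) = 0 := by
      have hmd : π m • (⟨π d, hmem.mpr dvd_rfl⟩ : I) = 0 :=
        Subtype.ext ((map_mul π m d).symm.trans (hπ.mpr (mul_comm m d ▸ dvd_rfl)))
      calc π (m * c) = π m • g ⟨π d, hmem.mpr dvd_rfl⟩ := by rw [← hc, map_mul, smul_eq_mul]
        _ = 0 := by rw [← map_smul, hmd, map_zero]
    exact (mul_dvd_mul_iff_left (right_ne_zero_of_mul hn)).mp (mul_comm d m ▸ hπ.mp hmc)
  refine ⟨LinearMap.toSpanSingleton _ _ (π b), fun z hz => ?_⟩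
  obtain ⟨w, rfl⟩ := Ideal.Quotient.mk_surjective z
  obtain ⟨v, rfl⟩ := hmem.mp hz
  have hdv : (⟨π (d * v), hz⟩ : I) = π v • ⟨π d, hmem.mpr dvd_rfl⟩ :=
    Subtype.ext ((congrArg π (mul_comm d v)).trans (map_mul π v d))
  rw [LinearMap.toSpanSingleton_apply]
  refine Eq.trans ?_ (congrArg g hdv).symm
  rw [map_smul, ← hc, smul_eq_mul, smul_eq_mul, ← map_mul, ← map_mul]
  congr 1
  ring

theorem isUnit_mk_span_pow_iff [IsPrincipalIdealRing D] {p : D} (hp : Prime p) {α : ℕ}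
    (hα : α ≠ 0) {f : D} : IsUnit (Ideal.Quotient.mk (Ideal.span {p ^ α}) f) ↔ ¬ p ∣ f := by
  have : (Ideal.span {p}).IsMaximal := PrincipalIdealRing.isMaximal_of_irreducible hp.irreducible
  rw [← Ideal.span_singleton_pow, Ideal.Quotient.isUnit_mk_pow_iff_notMem _ hα,
    Ideal.mem_span_singleton]

theorem mul_mk_pow_pred_eq_zero_iff [IsPrincipalIdealRing D] {p : D} (hp : Prime p) {α : ℕ}
    (hα : α ≠ 0) (a : D ⧸ Ideal.span {p ^ α}) :
    a * Ideal.Quotient.mk _ p ^ (α - 1) = 0 ↔ ¬ IsUnit a := by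
  obtain ⟨f, rfl⟩ := Ideal.Quotient.mk_surjective a
  rw [isUnit_mk_span_pow_iff hp hα, not_not, ← map_pow, ← map_mul, Ideal.Quotient.eq_zero_iff_dvd,
    ← mul_pow_sub_one hα, mul_dvd_mul_iff_right (pow_ne_zero _ hp.ne_zero)]

theorem isLocalRing_quotient_span_pow [IsPrincipalIdealRing D] {p : D} (hp : Prime p) {α : ℕ}
    (hα : α ≠ 0) : IsLocalRing (D ⧸ Ideal.span {p ^ α}) := by
  have : Nontrivial (D ⧸ Ideal.span {p ^ α}) := by
    rw [Ideal.Quotient.nontrivial_iff, Ne, Ideal.span_singleton_eq_top]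
    exact fun h => hp.not_isUnit ((isUnit_pow_iff hα).mp h)
  refine IsLocalRing.of_nonunits_add fun a b ha hb => ?_
  obtain ⟨f, rfl⟩ := Ideal.Quotient.mk_surjective a
  obtain ⟨g, rfl⟩ := Ideal.Quotient.mk_surjective b
  rw [mem_nonunits_iff, isUnit_mk_span_pow_iff hp hα, not_not] at ha hb
  rw [mem_nonunits_iff, ← map_add, isUnit_mk_span_pow_iff hp hα, not_not]
  exact dvd_add ha hb

end PrincipalQuotient

namespace QRep

variable {G : FinQuiver} {R : Type} [CommRing R] {r : G.V → ℕ}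

/-- The endomorphism algebra of a representation: the families of square matrices, one for each
vertex, commuting with the matrices of the representation. Its idempotents are the direct sum
decompositions of the representation. -/
def endo (x : QRep G R r) : Subalgebra R (∀ i, Matrix (Fin (r i)) (Fin (r i)) R) where
  carrier := {e | ∀ a, e (G.t a) * x a = x a * e (G.s a)}
  mul_mem' {e f} he hf a := by
    rw [Pi.mul_apply, Pi.mul_apply, Matrix.mul_assoc, hf a, ← Matrix.mul_assoc, he a,
      Matrix.mul_assoc]
  add_mem' {e f} he hf a := by
    rw [Pi.add_apply, Pi.add_apply, Matrix.add_mul, Matrix.mul_add, he a, hf a]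
  algebraMap_mem' c a := by
    simp [Algebra.algebraMap_eq_smul_one]

theorem mem_endo_iff {x : QRep G R r} {e : ∀ i, Matrix (Fin (r i)) (Fin (r i)) R} :
    e ∈ x.endo ↔ ∀ a, e (G.t a) * x a = x a * e (G.s a) :=
  Iff.rfl

end QRep

section MomentMap

variable {G : FinQuiver} {R : Type} [CommRing R] {r : G.V → ℕ}

theorem momentMap_eq_sum_single (x : QRep G R r) (y : QCoRep G R r) :
    momentMap G x y
      = ∑ a, Pi.single (G.t a) (x a * y a) - ∑ a, Pi.single (G.s a) (y a * x a) := by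
  have cast_eq_single (v i : G.V) (M : Matrix (Fin (r v)) (Fin (r v)) R) :
      (if h : v = i then cast (congrArg (fun v => Matrix (Fin (r v)) (Fin (r v)) R) h) M else 0)
        = (Pi.single v M : ∀ i, Matrix (Fin (r i)) (Fin (r i)) R) i := by
    by_cases h : v = i
    · subst h
      simp
    · rw [dif_neg h, Pi.single_eq_of_ne (Ne.symm h)]
  funext i
  simp only [momentMap, Pi.sub_apply, Finset.sum_apply, cast_eq_single]

/-- The moment map at a fixed representation `x`, as a linear map in `y`; its range is the
set of attained values. -/
noncomputable def momentMapLinear (x : QRep G R r) :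
    QCoRep G R r →ₗ[R] ∀ i, Matrix (Fin (r i)) (Fin (r i)) R where
  toFun := momentMap G x
  map_add' y z := by
    simp only [momentMap_eq_sum_single, Pi.add_apply, Matrix.add_mul, Matrix.mul_add,
      Pi.single_add, Finset.sum_add_distrib]
    abel
  map_smul' c y := by
    simp only [momentMap_eq_sum_single, Pi.smul_apply, Matrix.smul_mul, Matrix.mul_smul,
      Pi.single_smul, Finset.smul_sum, smul_sub, RingHom.id_apply]

theorem sum_trace_mul_single {ι : Type*} [Fintype ι] [DecidableEq ι] {n : ι → Type*}
    [∀ i, Fintype (n i)] (e : ∀ i, Matrix (n i) (n i) R) (v : ι) (M : Matrix (n v) (n v) R) :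
    ∑ i, (e i * (Pi.single v M : ∀ i, Matrix (n i) (n i) R) i).trace = (e v * M).trace := by
  rw [Finset.sum_eq_single_of_mem v (Finset.mem_univ v), Pi.single_eq_same]
  intro i _ hi
  rw [Pi.single_eq_of_ne hi, Matrix.mul_zero, Matrix.trace_zero]

theorem sum_trace_mul_momentMap (x : QRep G R r) (y : QCoRep G R r)
    (e : ∀ i, Matrix (Fin (r i)) (Fin (r i)) R) :
    ∑ i, (e i * momentMap G x y i).trace
      = ∑ a, ((e (G.t a) * x a - x a * e (G.s a)) * y a).trace := by
  simp only [momentMap_eq_sum_single, Pi.sub_apply, Finset.sum_apply, Matrix.mul_sub,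
    Matrix.mul_sum, Matrix.trace_sub, Matrix.trace_sum, Finset.sum_sub_distrib, Matrix.sub_mul]
  rw [Finset.sum_comm, Finset.sum_comm (γ := G.V)]
  simp only [sum_trace_mul_single, Matrix.mul_assoc, Matrix.trace_mul_comm (x _)]

theorem mem_endo_iff_forall_sum_trace_mul_momentMap_eq_zero {x : QRep G R r}
    {e : ∀ i, Matrix (Fin (r i)) (Fin (r i)) R} :
    e ∈ x.endo ↔ ∀ y, ∑ i, (e i * momentMap G x y i).trace = 0 := by
  simp only [sum_trace_mul_momentMap]
  refine ⟨fun he y => Finset.sum_eq_zero fun a _ => ?_, fun h a => ?_⟩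
  · rw [QRep.mem_endo_iff.mp he a, sub_self, Matrix.zero_mul, Matrix.trace_zero]
  · classical
    rw [← sub_eq_zero, Matrix.ext_iff_trace_mul_right]
    intro N
    have hN := h (Pi.single a N)
    rw [Finset.sum_eq_single_of_mem a (Finset.mem_univ a), Pi.single_eq_same] at hN
    · rw [hN, Matrix.zero_mul, Matrix.trace_zero]
    · intro b _ hb
      rw [Pi.single_eq_of_ne hb, Matrix.mul_zero, Matrix.trace_zero]

theorem exists_forall_apply_eq_sum_trace_mul {ι : Type*} [Fintype ι] {n : ι → Type*}
    [∀ i, Fintype (n i)] (φ : (∀ i, Matrix (n i) (n i) R) →ₗ[R] R) :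
    ∃ e : ∀ i, Matrix (n i) (n i) R, ∀ M, φ M = ∑ i, (e i * M i).trace := by
  classical
  let e (i : ι) : Matrix (n i) (n i) R := .of fun k l => φ (Pi.single i (Matrix.single l k 1))
  let ψ : (∀ i, Matrix (n i) (n i) R) →ₗ[R] R :=
    ∑ i, Matrix.traceLinearMap (n i) R R ∘ₗ LinearMap.mulLeft R (e i) ∘ₗ LinearMap.proj i
  have hφψ : φ = ψ := by
    refine LinearMap.pi_ext' fun v => Matrix.ext_linearMap R fun k l => LinearMap.ext_ring ?_
    simp [ψ, sum_trace_mul_single, Matrix.trace_mul_single, e]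
  refine ⟨e, fun M => ?_⟩
  simp [hφψ, ψ]

theorem exists_momentMap_eq_iff [IsLocalRing R] [Module.Injective R R] {τ : R} (hτ₀ : τ ≠ 0)
    (hτ : ∀ a ∈ IsLocalRing.maximalIdeal R, a * τ = 0) (x : QRep G R r)
    (b : ∀ i, Matrix (Fin (r i)) (Fin (r i)) R) :
    (∃ y, momentMap G x y = b) ↔ ∀ e ∈ x.endo, ∑ i, (e i * b i).trace = 0 := by
  refine ⟨?_, fun h => ?_⟩
  · rintro ⟨y, rfl⟩ e he
    exact mem_endo_iff_forall_sum_trace_mul_momentMap_eq_zero.mp he y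
  · change b ∈ (momentMapLinear x).range
    by_contra hb
    obtain ⟨φ, hφ, hφb⟩ := exists_linearMap_le_ker_of_notMem hτ hb
    obtain ⟨e, he⟩ := exists_forall_apply_eq_sum_trace_mul φ
    refine hτ₀ ?_
    rw [← hφb, he, h e]
    refine mem_endo_iff_forall_sum_trace_mul_momentMap_eq_zero.mpr fun y => ?_
    rw [← he]
    exact hφ ⟨y, rfl⟩

end MomentMap

section IdempotentMatrix

/-- The diagonal `n × n` projector onto the first `k` coordinates, the normal form of the
idempotent matrices of rank `k` over a local ring. -/
def diagProj (R : Type*) [CommRing R] (n k : ℕ) : Matrix (Fin n) (Fin n) R :=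
  Matrix.diagonal fun j => if (j : ℕ) < k then 1 else 0

variable {R : Type*} [CommRing R]

theorem trace_conj_diagProj {n k : ℕ} (h : k ≤ n) (g : (Matrix (Fin n) (Fin n) R)ˣ) :
    (g⁻¹.val * diagProj R n k * g.val).trace = k := by
  rw [Matrix.trace_mul_comm, ← Matrix.mul_assoc, Units.mul_inv, Matrix.one_mul, diagProj,
    Matrix.trace_diagonal, Finset.sum_boole, Fin.card_filter_val_lt, min_eq_right h]

theorem map_conj_diagProj {S : Type*} [CommRing S] (φ : R →+* S) {n : ℕ} (k : ℕ)
    (g : (Matrix (Fin n) (Fin n) R)ˣ) :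
    (g⁻¹.val * diagProj R n k * g.val).map φ
      = (Units.map φ.mapMatrix.toMonoidHom g)⁻¹.val * diagProj S n k *
        (Units.map φ.mapMatrix.toMonoidHom g).val := by
  have hD : (diagProj R n k).map φ = diagProj S n k := by
    simp only [diagProj, Matrix.diagonal_map (map_zero φ), apply_ite φ, map_one, map_zero]
  rw [← hD, Matrix.map_mul, Matrix.map_mul]
  rfl

theorem rank_conj_diagProj {K : Type*} [Field K] {n k : ℕ} (h : k ≤ n)
    (g : (Matrix (Fin n) (Fin n) K)ˣ) : (g⁻¹.val * diagProj K n k * g.val).rank = k := by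
  classical
  rw [Matrix.rank_mul_eq_left_of_isUnit_det _ _ ((Matrix.isUnit_iff_isUnit_det _).mp g.isUnit),
    Matrix.rank_mul_eq_right_of_isUnit_det _ _ ((Matrix.isUnit_iff_isUnit_det _).mp g⁻¹.isUnit),
    diagProj, Matrix.rank_diagonal, Fintype.card_subtype]
  simp only [ne_eq, ite_eq_right_iff, one_ne_zero, imp_false, not_not,
    Fin.card_filter_val_lt, min_eq_right h]

theorem mul_conj_eq_conj_mul_iff {m n : Type*} [Fintype m] [DecidableEq m] [Fintype n]
    [DecidableEq n] (g : (Matrix m m R)ˣ) (h : (Matrix n n R)ˣ) (D : Matrix m m R)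
    (E : Matrix n n R) (A : Matrix m n R) :
    D * (g.val * A * h⁻¹.val) = g.val * A * h⁻¹.val * E
      ↔ g⁻¹.val * D * g.val * A = A * (h⁻¹.val * E * h.val) := by
  have hg : g⁻¹.val * g.val = 1 := g.inv_mul
  have hg' : g.val * g⁻¹.val = 1 := g.mul_inv
  have hh : h⁻¹.val * h.val = 1 := h.inv_mul
  have hh' : h.val * h⁻¹.val = 1 := h.mul_inv
  constructor <;> intro H
  · calc g⁻¹.val * D * g.val * A
      _ = g⁻¹.val * (D * (g.val * A * h⁻¹.val)) * h.val := by
        simp only [Matrix.mul_assoc, hh, Matrix.mul_one]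
      _ = (g⁻¹.val * g.val) * A * (h⁻¹.val * E * h.val) := by
        rw [H]
        simp only [Matrix.mul_assoc]
      _ = A * (h⁻¹.val * E * h.val) := by rw [hg, Matrix.one_mul]
  · calc D * (g.val * A * h⁻¹.val)
      _ = (g.val * g⁻¹.val) * (D * (g.val * A * h⁻¹.val)) := by rw [hg', Matrix.one_mul]
      _ = g.val * (g⁻¹.val * D * g.val * A) * h⁻¹.val := by simp only [Matrix.mul_assoc]
      _ = g.val * A * h⁻¹.val * E := by
        rw [H]
        simp only [Matrix.mul_assoc, hh', Matrix.mul_one]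

variable [IsLocalRing R]

theorem free_of_isCompl {M : Type*} [AddCommGroup M] [Module R M] [Module.Finite R M]
    [Module.Free R M] {p q : Submodule R M} (h : IsCompl p q) :
    Module.Finite R p ∧ Module.Free R p := by
  have := Module.Finite.of_surjective (p.projectionOnto q h) (Submodule.projectionOnto_surjective h)
  have := Module.Projective.of_split p.subtype (p.projectionOnto q h)
    (Submodule.projectionOnto_comp_subtype h)
  exact ⟨inferInstance, Module.free_of_flat_of_isLocalRing⟩

theorem exists_basis_of_isIdempotentElem {M : Type*} [AddCommGroup M] [Module R M]
    [Module.Finite R M] [Module.Free R M] {f : Module.End R M} (hf : IsIdempotentElem f) :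
    ∃ (k l : ℕ) (c : Module.Basis (Fin k ⊕ Fin l) R M),
      (∀ j, f (c (Sum.inl j)) = c (Sum.inl j)) ∧ ∀ j, f (c (Sum.inr j)) = 0 := by
  have hc := LinearMap.IsIdempotentElem.isCompl hf
  obtain ⟨_, _⟩ := free_of_isCompl hc
  obtain ⟨_, _⟩ := free_of_isCompl hc.symm
  refine ⟨_, _, ((Module.finBasis R (LinearMap.range f)).prod
    (Module.finBasis R (LinearMap.ker f))).map (Submodule.prodEquivOfIsCompl _ _ hc),
    fun j => ?_, fun j => ?_⟩
  · simpa using (LinearMap.IsIdempotentElem.mem_range_iff hf).mp (Subtype.property _)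
  · simp

theorem exists_conj_diagProj_of_isIdempotentElem {n : ℕ} {E : Matrix (Fin n) (Fin n) R}
    (hE : IsIdempotentElem E) :
    ∃ k ≤ n, ∃ g : (Matrix (Fin n) (Fin n) R)ˣ, E = g⁻¹.val * diagProj R n k * g.val := by
  have hf : IsIdempotentElem (Matrix.toLin' E) := hE.map Matrix.toLinAlgEquiv'
  obtain ⟨k, l, c₀, hinl, hinr⟩ := exists_basis_of_isIdempotentElem hf
  have hkl : k + l = n := by simpa using (Module.finrank_eq_card_basis c₀).symm
  let σ : Fin k ⊕ Fin l ≃ Fin n := finSumFinEquiv.trans (finCongr hkl)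
  let c := c₀.reindex σ
  have hc : ∀ j, Matrix.toLin' E (c j) = (if (j : ℕ) < k then (1 : R) else 0) • c j := by
    refine σ.forall_congr_right.mp ?_
    rintro (j | j)
    · simpa [c, σ] using hinl j
    · simpa [c, σ] using hinr j
  have hD : LinearMap.toMatrix c c (Matrix.toLin' E) = diagProj R n k := by
    ext i j
    rw [LinearMap.toMatrix_apply, hc, map_smul, Finsupp.smul_apply, Module.Basis.repr_self,
      diagProj, Matrix.diagonal_apply, Finsupp.single_apply]
    obtain rfl | hij := eq_or_ne i j
    · simp
    · simp [hij, hij.symm]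
  let b := Pi.basisFun R (Fin n)
  refine ⟨k, by omega, ⟨c.toMatrix b, b.toMatrix c, c.toMatrix_mul_toMatrix_flip b,
    b.toMatrix_mul_toMatrix_flip c⟩, ?_⟩
  change E = b.toMatrix c * diagProj R n k * c.toMatrix b
  rw [← hD, basis_toMatrix_mul_linearMap_toMatrix_mul_basis_toMatrix]
  exact (LinearMap.toMatrix'_toLin' E).symm

end IdempotentMatrix

section Summands

variable {G : FinQuiver} {R : Type} [CommRing R] {r : G.V → ℕ}

theorem isBlockDiag_iff_diagProj_mul {m n m' n' : ℕ} (A : Matrix (Fin m) (Fin n) R) :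
    IsBlockDiag m' n' A ↔ diagProj R m m' * A = A * diagProj R n n' := by
  rw [← Matrix.ext_iff]
  refine forall_congr' fun k => forall_congr' fun l => ?_
  rw [diagProj, diagProj, Matrix.diagonal_mul, Matrix.mul_diagonal]
  by_cases hk : (k : ℕ) < m' <;> by_cases hl : (l : ℕ) < n' <;> simp [hk, hl, eq_comm]

theorem forall_isBlockDiag_glAct_iff (x : QRep G R r) (r' : G.V → ℕ)
    (g : ∀ i, (Matrix (Fin (r i)) (Fin (r i)) R)ˣ) :
    (∀ a, IsBlockDiag (r' (G.t a)) (r' (G.s a)) (glAct G g x a)) ↔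
      (fun i => (g i)⁻¹.val * diagProj R (r i) (r' i) * (g i).val) ∈ x.endo := by
  simp only [isBlockDiag_iff_diagProj_mul, glAct, mul_conj_eq_conj_mul_iff, QRep.mem_endo_iff]

theorem isSummandRank_iff (x : QRep G R r) (r' : G.V → ℕ) :
    IsSummandRank G x r' ↔ r' ≤ r ∧ ∃ g : ∀ i, (Matrix (Fin (r i)) (Fin (r i)) R)ˣ,
      (fun i => (g i)⁻¹.val * diagProj R (r i) (r' i) * (g i).val) ∈ x.endo := by
  simp only [IsSummandRank, forall_isBlockDiag_glAct_iff]
  constructor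
  · rintro ⟨r'', hr, h⟩
    exact ⟨fun i => (hr i).le.trans' (Nat.le_add_right _ _), h⟩
  · rintro ⟨hr, h⟩
    exact ⟨fun i => r i - r' i, fun i => Nat.add_sub_cancel' (hr i), h⟩

theorem IsSummandRank.exists_mem_endo_trace_eq {x : QRep G R r} {r' : G.V → ℕ}
    (h : IsSummandRank G x r') : ∃ e ∈ x.endo, ∀ i, (e i).trace = r' i := by
  obtain ⟨hle, g, hg⟩ := (isSummandRank_iff x r').mp h
  exact ⟨_, hg, fun i => trace_conj_diagProj (hle i) (g i)⟩

theorem isSummandRank_rank_of_isIdempotentElem [IsLocalRing R] {K : Type*} [Field K] (φ : R →+* K)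
    {x : QRep G R r} {e : ∀ i, Matrix (Fin (r i)) (Fin (r i)) R} (he : e ∈ x.endo)
    (hid : IsIdempotentElem e) : IsSummandRank G x fun i => ((e i).map φ).rank := by
  choose k hk g hg using fun i => exists_conj_diagProj_of_isIdempotentElem (congrFun hid i)
  have hrank : (fun i => ((e i).map φ).rank) = k := by
    funext i
    rw [hg i, map_conj_diagProj, rank_conj_diagProj (hk i)]
  rw [hrank, isSummandRank_iff]
  exact ⟨hk, g, (funext hg : e = _) ▸ he⟩

end Summands

section PrimaryComponent

open Polynomial UniqueFactorizationMonoid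

theorem exists_isIdempotentElem_isNilpotent_mul_isUnit_add {S : Type*} [CommRing S]
    [IsArtinianRing S] (a : S) :
    ∃ π : S, IsIdempotentElem π ∧ IsNilpotent (a * π) ∧ IsUnit (a + π) := by
  -- With `a ^ (n + 1) * b = a ^ n`, the idempotent `(a * b) ^ n` cuts out the part where `a` is
  -- invertible.
  obtain ⟨n, b, hb⟩ := IsArtinian.exists_pow_succ_smul_dvd a (1 : S)
  have hb : a ^ n * (a * b) = a ^ n := by
    simpa only [Nat.succ_eq_add_one, pow_succ, smul_eq_mul, mul_one, mul_assoc] using hb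
  have hpow (k : ℕ) : a ^ n * (a * b) ^ k = a ^ n := by
    induction k with
    | zero => rw [pow_zero, mul_one]
    | succ k ih => rw [pow_succ, ← mul_assoc, ih, hb]
  let u := (a * b) ^ n
  have hu : IsIdempotentElem u := by
    calc (a * b) ^ n * (a * b) ^ n = a ^ n * (a * b) ^ n * b ^ n := by rw [mul_pow]; ring
      _ = (a * b) ^ n := by rw [hpow, mul_pow]
  have habu : a * b * u = u := by
    calc a * b * (a * b) ^ n = a ^ n * (a * b) * b ^ n := by rw [mul_pow]; ring
      _ = (a * b) ^ n := by rw [hb, mul_pow]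
  have hnil : IsNilpotent (a * (1 - u)) := by
    refine ⟨n + 1, ?_⟩
    calc (a * (1 - u)) ^ (n + 1) = (a ^ n - a ^ n * u) * (a * (1 - u) ^ n) := by
          rw [mul_pow]; ring
      _ = 0 := by rw [hpow, sub_self, zero_mul]
  refine ⟨1 - u, hu.one_sub, hnil, ?_⟩
  have hunit : IsUnit (a * u + (1 - u)) := by
    refine IsUnit.of_mul_eq_one (b * u + (1 - u)) ?_
    linear_combination (a * b - a - b + 1) * hu.eq + habu
  have hsum : a + (1 - u) = a * u + (1 - u) + a * (1 - u) := by ring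
  rw [hsum]
  exact hnil.isUnit_add_left_of_commute hunit (Commute.all _ _)

variable {K V : Type*} [Field K] [AddCommGroup V] [Module K V] [FiniteDimensional K V]
  {f π : Module.End K V} {P : K[X]}

theorem not_dvd_charpoly_of_isUnit_aeval (hP : Irreducible P) (hu : IsUnit (aeval f P)) :
    ¬ P ∣ f.charpoly := by
  intro hdvd
  have : Fact (Irreducible P) := ⟨hP⟩
  -- Over `L = K[X] / (P)`, a divisor `P` of the characteristic polynomial gives an eigenvalue.
  let L := AdjoinRoot P
  let c : L := AdjoinRoot.root P
  let fL : Module.End L (TensorProduct K L V) := f.baseChange L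
  have haeval : Module.End.baseChangeHom K L V (aeval f P) = aeval fL (P.map (algebraMap K L)) := by
    rw [aeval_map_algebraMap, ← aeval_algHom_apply]
    rfl
  have hroot : (LinearMap.charpoly fL).IsRoot c := by
    rw [LinearMap.charpoly_baseChange, IsRoot, eval_map_algebraMap, AdjoinRoot.aeval_eq,
      AdjoinRoot.mk_eq_zero]
    exact hdvd
  obtain ⟨v, hv⟩ :=
    ((Module.End.hasEigenvalue_iff_isRoot_charpoly fL c).mpr hroot).exists_hasEigenvector
  have hker : aeval fL (P.map (algebraMap K L)) v = 0 := by
    rw [Module.End.aeval_apply_of_hasEigenvector hv, eval_map_algebraMap, AdjoinRoot.aeval_eq,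
      AdjoinRoot.mk_self, zero_smul]
  rw [← haeval] at hker
  have hinj := ((Module.End.isUnit_iff _).mp (hu.map (Module.End.baseChangeHom K L V))).injective
  exact hv.2 (hinj (hker.trans (map_zero _).symm))

theorem charpoly_eq_pow_of_isNilpotent_aeval (hP : Irreducible P)
    (hn : IsNilpotent (aeval f P)) (hPm : P.Monic) : ∃ c : ℕ, f.charpoly = P ^ c := by
  classical
  obtain ⟨N, hN⟩ := hn
  have heq : ∀ Q ∈ normalizedFactors f.charpoly, Q = P := by
    intro Q hQ
    have hQi := irreducible_of_normalized_factor Q hQ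
    by_contra hne
    refine not_dvd_charpoly_of_isUnit_aeval hQi ?_ (dvd_of_mem_normalizedFactors hQ)
    have hcop : IsCoprime Q (P ^ N) := by
      refine (hQi.coprime_iff_not_dvd.mpr fun hdvd => hne ?_).pow_right
      rw [← normalize_normalized_factor Q hQ, ← hPm.normalize_eq_self]
      exact normalize_eq_normalize_iff_associated.mpr (hQi.associated_of_dvd hP hdvd)
    obtain ⟨u, v, huv⟩ := hcop
    have h1 := congrArg (aeval f) huv
    rw [map_add, map_mul, map_mul, map_pow, hN, mul_zero, add_zero, map_one] at h1
    have h2 : aeval f Q * aeval f u = 1 := by rw [← map_mul, mul_comm, map_mul, h1]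
    exact IsUnit.of_mul_eq_one _ h2
  refine ⟨Multiset.card (normalizedFactors f.charpoly), ?_⟩
  rw [← Multiset.prod_replicate, ← Multiset.eq_replicate_card.mpr heq,
    prod_normalizedFactors_eq, f.charpoly_monic.normalize_eq_self]
  exact f.charpoly_monic.ne_zero

theorem count_normalizedFactors_pow_mul [DecidableEq K] (hP : Irreducible P) (hPm : P.Monic)
    {q : K[X]} (hq : ¬ P ∣ q) (c : ℕ) : (normalizedFactors (P ^ c * q)).count P = c := by
  have hq0 : q ≠ 0 := by
    rintro rfl
    exact hq (dvd_zero P)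
  rw [normalizedFactors_mul (pow_ne_zero c hP.ne_zero) hq0, normalizedFactors_pow,
    normalizedFactors_irreducible hP, hPm.normalize_eq_self, Multiset.count_add,
    Multiset.count_nsmul, Multiset.count_singleton_self, mul_one,
    Multiset.count_eq_zero_of_notMem fun h => hq (dvd_of_mem_normalizedFactors h), add_zero]

theorem eq_conj_prodMap_restrict {R M : Type*} [CommRing R] [AddCommGroup M] [Module R M]
    {p q : Submodule R M} (hpq : IsCompl p q) {f : Module.End R M} (hp : ∀ v ∈ p, f v ∈ p)
    (hq : ∀ v ∈ q, f v ∈ q) :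
    f = (Submodule.prodEquivOfIsCompl p q hpq).conj
      ((f.restrict hp).prodMap (f.restrict hq)) := by
  refine LinearMap.ext fun v => ?_
  obtain ⟨w, rfl⟩ := (Submodule.prodEquivOfIsCompl p q hpq).surjective v
  simp [LinearEquiv.conj_apply_apply]

theorem finrank_eq_count_mul_natDegree [DecidableEq K] {W : Type*} [AddCommGroup W] [Module K W]
    [FiniteDimensional K W] {g : Module.End K V} {h : Module.End K W} (hP : Irreducible P)
    (hPm : P.Monic) (hg : IsNilpotent (aeval g P)) (hh : IsUnit (aeval h P)) :
    Module.finrank K V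
      = (normalizedFactors (g.prodMap h).charpoly).count P * P.natDegree := by
  obtain ⟨c, hc⟩ := charpoly_eq_pow_of_isNilpotent_aeval hP hg hPm
  rw [LinearMap.charpoly_prodMap, hc,
    count_normalizedFactors_pow_mul hP hPm (not_dvd_charpoly_of_isUnit_aeval hP hh),
    ← g.charpoly_natDegree, hc, hPm.natDegree_pow]

theorem finrank_range_eq_count_mul_natDegree [DecidableEq K] (hP : Irreducible P) (hPm : P.Monic)
    (hπ : IsIdempotentElem π) (hcomm : Commute π f) (hnil : IsNilpotent (aeval f P * π))
    (hunit : IsUnit (aeval f P + π)) :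
    Module.finrank K π.range = (normalizedFactors f.charpoly).count P * P.natDegree := by
  obtain ⟨hrange, hker⟩ : (∀ v ∈ π.range, f v ∈ π.range) ∧ ∀ v ∈ π.ker, f v ∈ π.ker :=
    (LinearMap.IsIdempotentElem.commute_iff hπ).mp hcomm
  let g := f.restrict hrange
  let h := f.restrict hker
  let e := Submodule.prodEquivOfIsCompl _ _ (LinearMap.IsIdempotentElem.isCompl hπ)
  let ι : Module.End K π.range × Module.End K π.ker →ₐ[K] Module.End K V :=
    (LinearEquiv.conjAlgEquiv K e).toAlgHom.comp (LinearMap.prodMapAlgHom K π.range π.ker)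
  have hf : f = ι (g, h) :=
    eq_conj_prodMap_restrict (LinearMap.IsIdempotentElem.isCompl hπ) hrange hker
  have hπι : π = ι (1, 0) := (LinearMap.IsIdempotentElem.isProj_range π hπ).eq_conj_prodMap
  have hι : Function.Injective ι := by
    refine (LinearEquiv.conjAlgEquiv K e).injective.comp fun a b hab => ?_
    ext v
    · simpa using congrArg Prod.fst (LinearMap.congr_fun hab (v, 0))
    · simpa using congrArg Prod.snd (LinearMap.congr_fun hab (0, v))
  have haeval : aeval f P = ι (aeval g P, aeval h P) := by
    rw [hf, aeval_algHom_apply, aeval_prod_apply]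
  have hg : IsNilpotent (aeval g P) := by
    have hmul : aeval f P * π = ι ((aeval g P, aeval h P) * (1, 0)) := by
      rw [map_mul, ← haeval, ← hπι]
    rw [hmul, IsNilpotent.map_iff hι] at hnil
    simpa using hnil.map (RingHom.fst _ _)
  have hh : IsUnit (aeval h P) := by
    have hdet : LinearMap.det (aeval f P + π)
        = LinearMap.det (aeval g P + 1) * LinearMap.det (aeval h P + 0) := by
      rw [← LinearMap.det_prodMap, ← LinearMap.det_conj _ e]
      congr 1
      exact (congrArg₂ (· + ·) haeval hπι).trans (map_add ι _ _).symm
    rw [LinearMap.isUnit_iff_isUnit_det, hdet, add_zero] at hunit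
    exact (LinearMap.isUnit_iff_isUnit_det _).mpr (isUnit_of_mul_isUnit_right hunit)
  have hcharpoly : f.charpoly = (g.prodMap h).charpoly := by
    rw [hf]
    exact LinearEquiv.charpoly_conj e _
  rw [finrank_eq_count_mul_natDegree hP hPm hg hh, hcharpoly]

theorem exists_isIdempotentElem_commute_isNilpotent_isUnit {R A : Type*} [CommRing R]
    [IsArtinianRing R] [Ring A] [Algebra R A] [Module.Finite R A] (e : A) (p : R[X]) :
    ∃ π : A, IsIdempotentElem π ∧ Commute π e ∧ IsNilpotent (aeval e p * π) ∧
      IsUnit (aeval e p + π) := by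
  let S := Algebra.adjoin R {e}
  have : Module.Finite R S := inferInstanceAs (Module.Finite R (Subalgebra.toSubmodule S))
  have : IsArtinianRing S := IsArtinianRing.of_finite R S
  let e₀ : S := ⟨e, Algebra.self_mem_adjoin_singleton R e⟩
  have haeval : S.val (aeval e₀ p) = aeval e p := (aeval_algHom_apply S.val e₀ p).symm
  obtain ⟨π, hπ, hnil, hunit⟩ := exists_isIdempotentElem_isNilpotent_mul_isUnit_add (aeval e₀ p)
  refine ⟨S.val π, hπ.map S.val, (Commute.all π e₀).map S.val, ?_, ?_⟩
  · rw [← haeval, ← map_mul]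
    exact hnil.map S.val
  · rw [← haeval, ← map_add]
    exact hunit.map S.val

end PrimaryComponent

section SummandCounts

open Polynomial UniqueFactorizationMonoid IsLocalRing

variable {G : FinQuiver} {R : Type} [CommRing R] {r : G.V → ℕ}

/-- Base change of an endomorphism along `φ`, at the vertex `i`, acting on column vectors.
Being a ring homomorphism, it preserves idempotents, nilpotents and units. -/
noncomputable def QRep.endoEval (x : QRep G R r) {K : Type*} [CommRing K] (φ : R →+* K) (i : G.V) :
    x.endo →+* Module.End K (Fin (r i) → K) :=
  (Matrix.toLinAlgEquiv' : Matrix (Fin (r i)) (Fin (r i)) K ≃ₐ[K] _).toAlgHom.toRingHom.comp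
    (φ.mapMatrix.comp ((Pi.evalRingHom _ i).comp x.endo.val.toRingHom))

theorem QRep.endoEval_aeval (x : QRep G R r) {K : Type*} [CommRing K] (φ : R →+* K) (i : G.V)
    (e : x.endo) (p : R[X]) :
    x.endoEval φ i (aeval e p) = aeval (x.endoEval φ i e) (p.map φ) := by
  refine (map_aeval_eq_aeval_map (φ := φ) (ψ := x.endoEval φ i) ?_ p e).trans rfl
  ext c
  simp [QRep.endoEval, Algebra.algebraMap_eq_smul_one, Matrix.one_apply, Pi.single_apply,
    apply_ite φ]

theorem isSummandRank_count_mul_natDegree [IsLocalRing R] [IsArtinianRing R]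
    [DecidableEq (ResidueField R)] {x : QRep G R r}
    {e : ∀ i, Matrix (Fin (r i)) (Fin (r i)) R} (he : e ∈ x.endo) {P : (ResidueField R)[X]}
    (hP : Irreducible P) (hPm : P.Monic) :
    IsSummandRank G x fun i =>
      (normalizedFactors ((e i).map (residue R)).charpoly).count P * P.natDegree := by
  obtain ⟨p, rfl⟩ := Polynomial.map_surjective (residue R) residue_surjective P
  have : Module.Finite R x.endo := inferInstanceAs (Module.Finite R (Subalgebra.toSubmodule x.endo))
  obtain ⟨π, hπ, hcomm, hnil, hunit⟩ :=
    exists_isIdempotentElem_commute_isNilpotent_isUnit (⟨e, he⟩ : x.endo) p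
  convert isSummandRank_rank_of_isIdempotentElem (residue R) π.2 (hπ.map x.endo.val) with i
  let ρ := x.endoEval (residue R) i
  have hnil := hnil.map ρ
  have hunit := hunit.map ρ
  rw [map_mul, x.endoEval_aeval] at hnil
  rw [map_add, x.endoEval_aeval] at hunit
  rw [← Matrix.charpoly_toLin']
  exact (finrank_range_eq_count_mul_natDegree hP hPm (hπ.map ρ) (hcomm.map ρ) hnil hunit).symm

end SummandCounts

section TraceFromCounts

open Polynomial UniqueFactorizationMonoid

theorem monic_of_mem_normalizedFactors {K : Type*} [Field K] [DecidableEq K] {p P : K[X]}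
    (hP : P ∈ normalizedFactors p) : P.Monic := by
  rw [← normalize_normalized_factor P hP]
  exact monic_normalize (irreducible_of_normalized_factor P hP).ne_zero

theorem nextCoeff_eq_sum_count_normalizedFactors {K : Type*} [Field K] [DecidableEq K] {p : K[X]}
    (hp : p.Monic) {s : Finset K[X]} (hs : ∀ P ∈ normalizedFactors p, P ∈ s) :
    p.nextCoeff = ∑ P ∈ s, (normalizedFactors p).count P • P.nextCoeff := by
  have hprod : (normalizedFactors p).prod = p := by
    rw [prod_normalizedFactors_eq hp.ne_zero, hp.normalize_eq_self]
  calc p.nextCoeff = ((normalizedFactors p).map nextCoeff).sum := by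
        rw [← Monic.nextCoeff_multiset_prod _ _ fun _ => monic_of_mem_normalizedFactors,
          Multiset.map_id', hprod]
    _ = ∑ P ∈ (normalizedFactors p).toFinset, (normalizedFactors p).count P • P.nextCoeff :=
        Finset.sum_multiset_map_count _ _
    _ = ∑ P ∈ s, (normalizedFactors p).count P • P.nextCoeff := by
        refine Finset.sum_subset (fun P hP => hs P (Multiset.mem_toFinset.mp hP)) fun P _ hP => ?_
        rw [Multiset.count_eq_zero_of_notMem (Multiset.mem_toFinset.not.mp hP), zero_smul]

theorem sum_mul_trace_eq_zero_of_sum_mul_count_eq_zero {K : Type*} [Field K] [DecidableEq K]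
    {ι : Type*} [Fintype ι] {n : ι → Type*} [∀ i, Fintype (n i)] [∀ i, DecidableEq (n i)]
    {lam : ι → ℤ} {A : ∀ i, Matrix (n i) (n i) K}
    (h : ∀ P : K[X], Irreducible P → P.Monic →
      ∑ i, lam i * ((normalizedFactors (A i).charpoly).count P : ℤ) = 0) :
    ∑ i, (lam i : K) * (A i).trace = 0 := by
  let s : Finset K[X] := Finset.univ.biUnion fun i => (normalizedFactors (A i).charpoly).toFinset
  have hmem (i : ι) : ∀ P ∈ normalizedFactors (A i).charpoly, P ∈ s := fun P hP =>
    Finset.mem_biUnion.mpr ⟨i, Finset.mem_univ i, Multiset.mem_toFinset.mpr hP⟩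
  have htrace (i : ι) : (lam i : K) * (A i).trace
      = -∑ P ∈ s, ((lam i * ((normalizedFactors (A i).charpoly).count P : ℤ) : ℤ) : K)
          * P.nextCoeff := by
    rw [Matrix.trace_eq_neg_charpoly_nextCoeff,
      nextCoeff_eq_sum_count_normalizedFactors (A i).charpoly_monic (hmem i), mul_neg,
      Finset.mul_sum]
    simp only [nsmul_eq_mul, Int.cast_mul, Int.cast_natCast, mul_assoc]
  rw [Finset.sum_congr rfl fun i _ => htrace i, Finset.sum_neg_distrib, neg_eq_zero,
    Finset.sum_comm]
  refine Finset.sum_eq_zero fun P hP => ?_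
  obtain ⟨i, -, hi⟩ := Finset.mem_biUnion.mp hP
  have hPi : P ∈ normalizedFactors (A i).charpoly := Multiset.mem_toFinset.mp hi
  rw [← Finset.sum_mul, ← Int.cast_sum, h P (irreducible_of_normalized_factor P hPi)
    (monic_of_mem_normalizedFactors hPi), Int.cast_zero, zero_mul]

end TraceFromCounts

theorem sum_mul_eq_zero_of_cast_eq_zero {ι K : Type*} [Fintype ι] [Ring K] {lam : ι → ℤ}
    {r r' : ι → ℕ} (hchar : ringChar K = 0 ∨ ∑ i, (lam i).natAbs * r i < ringChar K)
    (hr : r' ≤ r) (h : ((∑ i, lam i * (r' i : ℤ) : ℤ) : K) = 0) :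
    ∑ i, lam i * (r' i : ℤ) = 0 := by
  have hdvd : (ringChar K : ℤ) ∣ ∑ i, lam i * (r' i : ℤ) :=
    (CharP.intCast_eq_zero_iff K (ringChar K) _).mp h
  rcases hchar with h0 | hlt
  · rwa [h0, Nat.cast_zero, zero_dvd_iff] at hdvd
  · refine Int.eq_zero_of_abs_lt_dvd hdvd ?_
    calc |∑ i, lam i * (r' i : ℤ)| ≤ ∑ i, |lam i * (r' i : ℤ)| := Finset.abs_sum_le_sum_abs _ _
      _ ≤ ∑ i, (((lam i).natAbs * r i : ℕ) : ℤ) := by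
        refine Finset.sum_le_sum fun i _ => ?_
        rw [abs_mul, Nat.abs_cast, Nat.cast_mul, Int.natCast_natAbs]
        gcongr
        exact hr i
      _ < ringChar K := mod_cast hlt

section Criterion

open IsLocalRing

variable {G : FinQuiver} {R : Type} [CommRing R] {r : G.V → ℕ}

theorem forall_sum_mul_residue_trace_eq_zero_iff [IsLocalRing R] [IsArtinianRing R]
    {lam : G.V → ℤ}
    (hchar : ringChar (ResidueField R) = 0 ∨
      ∑ i, (lam i).natAbs * r i < ringChar (ResidueField R)) (x : QRep G R r) :
    (∀ e ∈ x.endo, ∑ i, (lam i : ResidueField R) * residue R (e i).trace = 0) ↔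
      ∀ r', IsSummandRank G x r' → ∑ i, lam i * (r' i : ℤ) = 0 := by
  classical
  constructor
  · intro h r' hr'
    obtain ⟨e, he, htr⟩ := hr'.exists_mem_endo_trace_eq
    refine sum_mul_eq_zero_of_cast_eq_zero hchar ((isSummandRank_iff x r').mp hr').1 ?_
    simpa only [htr, map_natCast, Int.cast_sum, Int.cast_mul, Int.cast_natCast] using h e he
  · intro h e he
    simp only [AddMonoidHom.map_trace]
    refine sum_mul_trace_eq_zero_of_sum_mul_count_eq_zero fun P hP hPm => ?_
    have hsum := h _ (isSummandRank_count_mul_natDegree he hP hPm)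
    simp only [Nat.cast_mul, ← mul_assoc, ← Finset.sum_mul] at hsum
    exact (mul_eq_zero.mp hsum).resolve_right (mod_cast hP.natDegree_pos.ne')

theorem deformed_fibre_lift_criterion_general [IsArtinianRing R] [IsLocalRing R]
    [Module.Injective R R] {τ : R} (hτ : ∀ a, a * τ = 0 ↔ a ∈ maximalIdeal R) (lam : G.V → ℤ)
    (hchar : ringChar (ResidueField R) = 0 ∨
      ∑ i, (lam i).natAbs * r i < ringChar (ResidueField R)) (x : QRep G R r) :
    (∃ y : QCoRep G R r, ∀ i, momentMap G x y i = (τ * (lam i : R)) • 1) ↔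
      ∀ r', IsSummandRank G x r' → ∑ i, lam i * (r' i : ℤ) = 0 := by
  have hτ₀ : τ ≠ 0 := by
    rintro rfl
    exact (Ideal.ne_top_iff_one _).mp (maximalIdeal.isMaximal R).ne_top ((hτ 1).mp (mul_zero 1))
  rw [← forall_sum_mul_residue_trace_eq_zero_iff hchar x]
  simp only [← funext_iff (g := fun i => (τ * (lam i : R)) • (1 : Matrix _ _ R))]
  rw [exists_momentMap_eq_iff hτ₀ (fun a => (hτ a).mpr)]
  refine forall₂_congr fun e _ => ?_
  have hsum : ∑ i, (e i * (τ * (lam i : R)) • 1).trace = (∑ i, (lam i : R) * (e i).trace) * τ := by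
    simp only [Matrix.mul_smul, Matrix.mul_one, Matrix.trace_smul, smul_eq_mul, Finset.sum_mul]
    exact Finset.sum_congr rfl fun i _ => by ring
  rw [hsum, hτ, ← residue_eq_zero_iff, map_sum]
  simp only [map_mul, map_intCast]

end Criterion

namespace TruncRing

open IsLocalRing

instance instInjective (F : Type) [Field F] (α : ℕ) :
    Module.Injective (TruncRing F α) (TruncRing F α) :=
  injective_quotient_span_singleton (pow_ne_zero α Polynomial.X_ne_zero)

instance instIsArtinianRing (F : Type) [Field F] (α : ℕ) : IsArtinianRing (TruncRing F α) :=
  have : Module.Finite F (TruncRing F α) := (Polynomial.monic_X_pow α).finite_quotient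
  IsArtinianRing.of_finite F (TruncRing F α)

variable (F : Type) [Field F] (α : ℕ) [NeZero α]

instance instIsLocalRing : IsLocalRing (TruncRing F α) :=
  isLocalRing_quotient_span_pow Polynomial.prime_X (NeZero.ne α)

theorem mul_tvar_pow_pred_eq_zero_iff (a : TruncRing F α) :
    a * tvar F α ^ (α - 1) = 0 ↔ a ∈ maximalIdeal (TruncRing F α) :=
  mul_mk_pow_pred_eq_zero_iff Polynomial.prime_X (NeZero.ne α) a

theorem ringChar_residueField : ringChar (ResidueField (TruncRing F α)) = ringChar F :=
  (Algebra.ringChar_eq F _).symm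

end TruncRing

/-- Let `Q` be a finite quiver, `α ≥ 1`, `r ∈ ℕ^{Q₀}`, `λ ∈ ℤ^{Q₀}`, and
`𝔽_q` a finite field of characteristic `p > Σ_i |λ_i| r_i`; set `R := 𝔽_q[t]/(t^α)`.
Let `x` be a locally free representation of rank `r` over `R`.  Then there exists `y`
with `μ(x,y) = (t^{α−1} λ_i · Id)_i` if and only if every rank vector `r'` of a direct
summand of `x` satisfies `Σ_i λ_i r'_i = 0` (as integers). -/
theorem deformed_fibre_lift_criterion (G : FinQuiver) (α : ℕ) (hα : 1 ≤ α)
    (r : G.V → ℕ) (lam : G.V → ℤ)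
    (F : Type) [Field F] [Fintype F]
    (hchar : ∑ i : G.V, (lam i).natAbs * r i < ringChar F)
    (x : QRep G (TruncRing F α) r) :
    (∃ y : QCoRep G (TruncRing F α) r,
        ∀ i : G.V, momentMap G x y i
          = (tvar F α ^ (α - 1) * ((lam i : ℤ) : TruncRing F α)) •
              (1 : Matrix (Fin (r i)) (Fin (r i)) (TruncRing F α)))
      ↔ ∀ r' : G.V → ℕ, IsSummandRank G x r' → ∑ i : G.V, lam i * (r' i : ℤ) = 0 := by
  have : NeZero α := ⟨Nat.one_le_iff_ne_zero.mp hα⟩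
  exact deformed_fibre_lift_criterion_general (TruncRing.mul_tvar_pow_pred_eq_zero_iff F α) lam
    (.inr (by rwa [TruncRing.ringChar_residueField])) x
end

section
/- Assume that ∫_{ℤ_p^{r_A}} ‖Δ_r(x)‖^{−1} dμ(x) < ∞ (the integrand, valued in [0,∞], is finite outside a Haar-null set). Then lim_{n→∞} p^{−n(r_A + r_B − r)} · #{ (a,b) ∈ (ℤ/p^nℤ)^{r_A} × (ℤ/p^nℤ)^{r_B} : θ_n(a)·b = 0 } = ∫_{ℤ_p^{r_A}} ‖Δ_r(x)‖^{−1} dμ(x). -/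
open MeasureTheory

noncomputable instance (p : ℕ) [Fact p.Prime] : MeasurableSpace ℤ_[p] := borel _
instance (p : ℕ) [Fact p.Prime] : BorelSpace ℤ_[p] := ⟨rfl⟩

/-- The Haar probability measure on the compact additive group `ℤ_p`. -/
noncomputable def padicHaar (p : ℕ) [Fact p.Prime] : Measure ℤ_[p] :=
  Measure.addHaarMeasure ⟨⟨Set.univ, isCompact_univ⟩, by simp⟩

/-- The Haar probability measure on `ℤ_p^N` (product of the Haar probability measures on
the factors). -/
noncomputable def padicHaarPi (p : ℕ) [Fact p.Prime] (N : ℕ) :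
    Measure (Fin N → ℤ_[p]) :=
  Measure.pi fun _ => padicHaar p

/-- `‖Δ_i(A)‖`: the maximum of the `p`-adic absolute values of all `i × i` minors of the
matrix `A` (with the conventions `‖Δ_0(A)‖ = 1`, and `‖Δ_i(A)‖ = 0` when `i` exceeds the
size of `A`). -/
noncomputable def minorNorm {p : ℕ} [Fact p.Prime] {m n : ℕ}
    (A : Matrix (Fin m) (Fin n) ℤ_[p]) (i : ℕ) : ℝ :=
  ⨆ ρ : (Fin i → Fin m) × (Fin i → Fin n), ‖(A.submatrix ρ.1 ρ.2).det‖

/-- The number of pairs `(a,b) ∈ (ℤ/p^nℤ)^{r_A} × (ℤ/p^nℤ)^{r_B}` with `θ_n(a)·b = 0`,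
where `θ_n` is the map induced by `θ` modulo `p^n` (computed via lifts, on which it does
not depend). -/
noncomputable def solCount (p : ℕ) [Fact p.Prime] {rA rB rC : ℕ}
    (θ : (Fin rA → ℤ_[p]) →ₗ[ℤ_[p]] Matrix (Fin rC) (Fin rB) ℤ_[p]) (n : ℕ) : ℕ :=
  Nat.card {ab : (Fin rA → ZMod (p ^ n)) × (Fin rB → ZMod (p ^ n)) //
    ∀ k : Fin rC,
      PadicInt.toZModPow n
        ((θ fun j => ((ab.1 j).val : ℤ_[p])).mulVec (fun j => ((ab.2 j).val : ℤ_[p])) k)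
        = 0}

/-! Over the principal ideal domain `ℤ_p`, Smith normal form attaches to a matrix of rank at most
`r` elementary divisors `a_1, …, a_r` (some possibly zero) with `‖Δ_r‖ = ∏ ‖a_i‖`. Modulo `p ^ n`
the equation `a x = 0` has `min (‖a‖⁻¹, p ^ n)` solutions, so the number of solutions `b` of
`θ(x) b ≡ 0`, divided by `p ^ (n (r_B - r))`, is `∏ min (‖a_i‖⁻¹, p ^ n)`: it increases with `n` to
`‖Δ_r(x)‖⁻¹`. Averaging over `x ∈ ℤ_p^{r_A}` gives exactly the normalized count of pairs `(a, b)`,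
and monotone convergence evaluates its limit in `[0, ∞]`. -/

section Matrices

open Matrix

theorem det_mul_eq_sum_prod_mul_det {R m n : Type*} [CommRing R] [Fintype m] [Fintype n]
    [DecidableEq n] (T : Matrix n m R) (A : Matrix m n R) :
    (T * A).det = ∑ f : n → m, (∏ i, T i (f i)) * (A.submatrix f id).det := by
  have hrows : T * A = fun i => ∑ j, T i j • A j := by
    ext i l
    simp [mul_apply, Finset.sum_apply]
  rw [hrows]
  refine ((detRowAlternating (n := n) (R := R)).toMultilinearMap.map_sum
    fun i j => T i j • A j).trans (Finset.sum_congr rfl fun f _ => ?_)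
  exact (detRowAlternating (n := n) (R := R)).toMultilinearMap.map_smul_univ _ _

theorem exists_diagonal_factorization {R : Type*} [CommRing R] [IsDomain R]
    [IsPrincipalIdealRing R] {m k : Type*} [Fintype m] [Fintype k] (A : Matrix m k R) :
    ∃ (s : ℕ) (a : Fin s → R) (L : Matrix m (Fin s) R) (N : Matrix (Fin s) k R)
      (T : Matrix (Fin s) m R) (S : Matrix k (Fin s) R),
      A = L * diagonal a * N ∧ T * L = 1 ∧ N * S = 1 ∧ ∀ i, a i ≠ 0 := by
  classical
  obtain ⟨s, snf⟩ := Submodule.smithNormalForm (Pi.basisFun R m) (LinearMap.range A.mulVecLin)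
  choose lift hlift using fun i => LinearMap.mem_range.1 (snf.bN i).2
  let incl : (Fin s → R) →ₗ[R] (m → R) := Fintype.linearCombination R (snf.bM ∘ snf.f)
  let coords : (k → R) →ₗ[R] (Fin s → R) :=
    snf.bN.equivFun.toLinearMap ∘ₗ A.mulVecLin.rangeRestrict
  refine ⟨s, snf.a, incl.toMatrix', coords.toMatrix',
    (LinearMap.pi fun i => snf.bM.coord (snf.f i)).toMatrix',
    (Fintype.linearCombination R lift).toMatrix', ?_, ?_, ?_, ?_⟩
  · refine toLin'.injective (LinearMap.ext fun v => ?_)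
    have hv := congrArg Subtype.val (snf.bN.sum_equivFun (A.mulVecLin.rangeRestrict v))
    simp only [Submodule.coe_sum, Submodule.coe_smul, snf.snf] at hv
    simpa [toLin'_mul, incl, coords, Fintype.linearCombination_apply, mulVec_diagonal, smul_smul,
      mul_comm] using hv.symm
  · rw [← LinearMap.toMatrix'_comp, ← LinearMap.toMatrix'_id]
    congr 1
    ext i j
    simp [incl, Finsupp.single_apply, Pi.single_apply, eq_comm]
  · rw [← LinearMap.toMatrix'_comp, ← LinearMap.toMatrix'_id]
    congr 1
    ext i j
    have : A.mulVecLin.rangeRestrict (lift i) = snf.bN i := Subtype.ext (hlift i)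
    simp [coords, this, Pi.single_apply, eq_comm]
  · intro i hi
    apply snf.bN.ne_zero i
    ext1
    rw [snf.snf, hi, zero_smul, Submodule.coe_zero]

theorem card_ker_mul_mul {R : Type*} [CommRing R] [Finite R] {m k s t : Type*} [Fintype m]
    [Fintype k] [Fintype s] [Fintype t] [DecidableEq s] [DecidableEq t]
    {L : Matrix m s R} {M : Matrix s t R} {N : Matrix t k R} {T : Matrix s m R} {S : Matrix k t R}
    (hL : T * L = 1) (hN : N * S = 1) :
    Nat.card (LinearMap.ker (L * M * N).mulVecLin) * Nat.card R ^ Fintype.card t =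
      Nat.card (LinearMap.ker M.mulVecLin) * Nat.card R ^ Fintype.card k := by
  have hsurj : Function.Surjective N.mulVecLin := fun v =>
    ⟨S *ᵥ v, by rw [mulVecLin_apply, mulVec_mulVec, hN, one_mulVec]⟩
  have hinj : Function.Injective L.mulVec := fun v w h => by
    simpa [mulVec_mulVec, hL] using congrArg T.mulVec h
  have hker : LinearMap.ker (L * M * N).mulVecLin =
      (LinearMap.ker M.mulVecLin).comap N.mulVecLin := by
    ext v
    rw [LinearMap.mem_ker, Submodule.mem_comap, LinearMap.mem_ker, mulVecLin_apply,
      mulVecLin_apply, mulVecLin_apply, ← mulVec_mulVec, ← mulVec_mulVec, ← mulVec_zero L,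
      hinj.eq_iff]
  have hindex := AddSubgroup.index_comap_of_surjective (LinearMap.ker M.mulVecLin).toAddSubgroup
    (f := N.mulVecLin.toAddMonoidHom) hsurj
  have hcard_t := (LinearMap.ker M.mulVecLin).toAddSubgroup.card_mul_index
  have hcard_k := ((LinearMap.ker M.mulVecLin).comap N.mulVecLin).toAddSubgroup.card_mul_index
  rw [Nat.card_fun, Nat.card_eq_fintype_card (α := t)] at hcard_t
  rw [Nat.card_fun, Nat.card_eq_fintype_card (α := k)] at hcard_k
  rw [hker, ← hcard_t, ← hcard_k]
  change _ = _ * (_ * ((LinearMap.ker M.mulVecLin).toAddSubgroup.comap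
    N.mulVecLin.toAddMonoidHom).index)
  rw [hindex]
  exact mul_left_comm _ _ _

theorem card_ker_diagonal {R s : Type*} [CommRing R] [Fintype s] [DecidableEq s] (a : s → R) :
    Nat.card (LinearMap.ker (diagonal a).mulVecLin) =
      ∏ i, Nat.card {x : R // a i * x = 0} := by
  rw [← Nat.card_pi]
  refine Nat.card_congr ((Equiv.subtypeEquivRight fun v => ?_).trans
    Equiv.subtypePiEquivPi)
  simp [funext_iff, mulVec_diagonal]

theorem linearMap_apply_map_congr {R S ι m n : Type*} [Semiring R] [Semiring S] [Finite ι]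
    (φ : R →+* S) (θ : (ι → R) →ₗ[R] Matrix m n R) {x y : ι → R} (h : φ ∘ x = φ ∘ y) :
    (θ x).map φ = (θ y).map φ := by
  classical
  cases nonempty_fintype ι
  have hxy : ∀ l, φ (x l) = φ (y l) := congrFun h
  ext i j
  simp only [map_apply, θ.pi_apply_eq_sum_univ x, θ.pi_apply_eq_sum_univ y, Matrix.sum_apply,
    Matrix.smul_apply, smul_eq_mul, map_sum, map_mul, hxy]

end Matrices

section Limits

open Filter
open scoped ENNReal Topology

theorem tendsto_finsetProd_of_ne_zero {ι α : Type*} {l : Filter α} {s : Finset ι} {f : ι → α → ℝ≥0∞}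
    {c : ι → ℝ≥0∞} (hc : ∀ i ∈ s, c i ≠ 0) (hf : ∀ i ∈ s, Tendsto (f i) l (𝓝 (c i))) :
    Tendsto (fun x => ∏ i ∈ s, f i x) l (𝓝 (∏ i ∈ s, c i)) := by
  classical
  induction s using Finset.induction_on with
  | empty => simp only [Finset.prod_empty, tendsto_const_nhds]
  | insert i s hi ih =>
    rw [Finset.forall_mem_insert] at hc hf
    simp only [Finset.prod_insert hi]
    exact ENNReal.Tendsto.mul hf.1 (.inl hc.1) (ih hc.2 hf.2)
      (.inl (Finset.prod_ne_zero_iff.2 hc.2))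

end Limits

section Haar

open scoped ENNReal

theorem lintegral_comp_addMonoidHom {G H : Type*} [AddGroup G] [MeasurableSpace G]
    [MeasurableAdd G] [AddGroup H] [Fintype H] [MeasurableSpace H] [DiscreteMeasurableSpace H]
    (μ : Measure G) [μ.IsAddLeftInvariant] [IsProbabilityMeasure μ] {f : G →+ H}
    (hf : Measurable f) (hsurj : Function.Surjective f) (F : H → ℝ≥0∞) :
    ∫⁻ x, F (f x) ∂μ = (∑ a, F a) / Nat.card H := by
  have : IsProbabilityMeasure (μ.map f) := Measure.isProbabilityMeasure_map hf.aemeasurable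
  have : (μ.map f).IsAddLeftInvariant := isAddLeftInvariant_map f.toAddHom hf hsurj
  have hmass : ∀ a, μ.map f {a} = μ.map f {0} := fun a => by
    rw [← measure_preimage_add (μ.map f) a {a}]
    simp
  have hcard : μ.map f {0} * Nat.card H = 1 := by
    have hsum := sum_measure_singleton (μ := μ.map f) (s := (Finset.univ : Finset H))
    simp only [hmass, Finset.sum_const, Finset.coe_univ, measure_univ, nsmul_eq_mul] at hsum
    rw [mul_comm, Nat.card_eq_fintype_card]
    exact hsum
  rw [← lintegral_map (Measurable.of_discrete (f := F)) hf, lintegral_fintype]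
  simp only [hmass]
  rw [← Finset.sum_mul, ENNReal.eq_inv_of_mul_eq_one_left hcard, div_eq_mul_inv]

variable {p : ℕ} [Fact p.Prime]

instance : (padicHaar p).IsAddHaarMeasure :=
  inferInstanceAs (Measure.addHaarMeasure _).IsAddHaarMeasure

instance : IsProbabilityMeasure (padicHaar p) :=
  ⟨Measure.addHaarMeasure_self (K₀ := ⟨⟨Set.univ, isCompact_univ⟩, by simp⟩)⟩

instance (N : ℕ) : (padicHaarPi p N).IsAddLeftInvariant :=
  inferInstanceAs (Measure.pi fun _ => padicHaar p).IsAddLeftInvariant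

instance (N : ℕ) : IsProbabilityMeasure (padicHaarPi p N) :=
  inferInstanceAs (IsProbabilityMeasure (Measure.pi fun _ => padicHaar p))

theorem measurable_toZModPow (n : ℕ) :
    Measurable (PadicInt.toZModPow n : ℤ_[p] → ZMod (p ^ n)) := by
  refine measurable_to_countable fun x => ?_
  have hfiber : PadicInt.toZModPow n ⁻¹' {PadicInt.toZModPow n x} =
      Metric.closedBall x ((p : ℝ) ^ (-n : ℤ)) := by
    ext y
    rw [Set.mem_preimage, Set.mem_singleton_iff, ← sub_eq_zero, ← map_sub, ← RingHom.mem_ker,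
      PadicInt.ker_toZModPow, mem_closedBall_iff_norm, PadicInt.norm_le_pow_iff_mem_span_pow]
  rw [hfiber]
  exact Metric.isClosed_closedBall.measurableSet

theorem lintegral_padicHaarPi_comp_toZModPow {N n : ℕ} (F : (Fin N → ZMod (p ^ n)) → ℝ≥0∞) :
    ∫⁻ x, F (PadicInt.toZModPow n ∘ x) ∂padicHaarPi p N = (∑ a, F a) / (p ^ n) ^ N := by
  have hmeas : Measurable fun x : Fin N → ℤ_[p] => PadicInt.toZModPow n ∘ x :=
    measurable_pi_lambda _ fun j => (measurable_toZModPow n).comp (measurable_pi_apply j)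
  have hint := lintegral_comp_addMonoidHom (padicHaarPi p N)
    (f := (PadicInt.toZModPow n).toAddMonoidHom.compLeft (Fin N)) hmeas
    (ZMod.ringHom_surjective (PadicInt.toZModPow n)).comp_left F
  rw [Nat.card_fun, Nat.card_zmod, Nat.card_fin, Nat.cast_pow, Nat.cast_pow] at hint
  exact hint

end Haar

section MinorNorm

open Matrix

variable {p : ℕ} [Fact p.Prime] {m k s : ℕ}

theorem norm_det_submatrix_le_minorNorm (A : Matrix (Fin m) (Fin k) ℤ_[p]) {i : ℕ}
    (I : Fin i → Fin m) (J : Fin i → Fin k) : ‖(A.submatrix I J).det‖ ≤ minorNorm A i :=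
  le_ciSup (f := fun ρ : (Fin i → Fin m) × (Fin i → Fin k) => ‖(A.submatrix ρ.1 ρ.2).det‖)
    (Set.finite_range _).bddAbove (I, J)

theorem minorNorm_le {A : Matrix (Fin m) (Fin k) ℤ_[p]} {i : ℕ} {c : ℝ} (hc : 0 ≤ c)
    (h : ∀ (I : Fin i → Fin m) (J : Fin i → Fin k), ‖(A.submatrix I J).det‖ ≤ c) :
    minorNorm A i ≤ c :=
  Real.iSup_le (fun ρ => h ρ.1 ρ.2) hc

theorem minorNorm_nonneg (A : Matrix (Fin m) (Fin k) ℤ_[p]) (i : ℕ) : 0 ≤ minorNorm A i :=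
  Real.iSup_nonneg fun _ => norm_nonneg _

theorem minorNorm_transpose (A : Matrix (Fin m) (Fin k) ℤ_[p]) (i : ℕ) :
    minorNorm Aᵀ i = minorNorm A i := by
  refine (Equiv.prodComm _ _).iSup_congr fun ρ => ?_
  rw [← det_transpose, transpose_submatrix]
  rfl

theorem minorNorm_mul_le_right (T : Matrix (Fin s) (Fin m) ℤ_[p]) (A : Matrix (Fin m) (Fin k) ℤ_[p])
    (i : ℕ) : minorNorm (T * A) i ≤ minorNorm A i := by
  refine minorNorm_le (minorNorm_nonneg A i) fun I J => ?_
  rw [submatrix_mul T A I id J Function.bijective_id, det_mul_eq_sum_prod_mul_det]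
  refine IsUltrametricDist.norm_sum_le_of_forall_le_of_nonneg (minorNorm_nonneg A i) fun f _ => ?_
  rw [norm_mul]
  exact (mul_le_of_le_one_left (norm_nonneg _) (PadicInt.norm_le_one _)).trans
    (norm_det_submatrix_le_minorNorm A f J)

theorem minorNorm_mul_le_left (A : Matrix (Fin m) (Fin k) ℤ_[p]) (S : Matrix (Fin k) (Fin s) ℤ_[p])
    (i : ℕ) : minorNorm (A * S) i ≤ minorNorm A i := by
  rw [← minorNorm_transpose, transpose_mul, ← minorNorm_transpose A]
  exact minorNorm_mul_le_right Sᵀ Aᵀ i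

theorem minorNorm_mul_mul_of_mul_eq_one {t : ℕ} {L : Matrix (Fin m) (Fin s) ℤ_[p]}
    {M : Matrix (Fin s) (Fin t) ℤ_[p]} {N : Matrix (Fin t) (Fin k) ℤ_[p]}
    {T : Matrix (Fin s) (Fin m) ℤ_[p]} {S : Matrix (Fin k) (Fin t) ℤ_[p]}
    (hL : T * L = 1) (hN : N * S = 1) (i : ℕ) : minorNorm (L * M * N) i = minorNorm M i := by
  apply le_antisymm
  · exact (minorNorm_mul_le_left _ N i).trans (minorNorm_mul_le_right L M i)
  · have hM : M = T * (L * M * N) * S := by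
      rw [Matrix.mul_assoc L, ← Matrix.mul_assoc T, hL, Matrix.one_mul, Matrix.mul_assoc, hN,
        Matrix.mul_one]
    calc minorNorm M i = minorNorm (T * (L * M * N) * S) i := by rw [← hM]
      _ ≤ minorNorm (L * M * N) i :=
        (minorNorm_mul_le_left _ S i).trans (minorNorm_mul_le_right T _ i)

theorem minorNorm_self (M : Matrix (Fin s) (Fin s) ℤ_[p]) : minorNorm M s = ‖M.det‖ := by
  refine le_antisymm (minorNorm_le (norm_nonneg _) fun I J => ?_)
    (norm_det_submatrix_le_minorNorm M id id)
  have hfactor : M.submatrix I J =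
      (1 : Matrix (Fin s) (Fin s) ℤ_[p]).submatrix I id * M *
        (1 : Matrix (Fin s) (Fin s) ℤ_[p]).submatrix id J := by
    ext i j
    simp [mul_apply, one_apply]
  rw [hfactor, det_mul, det_mul, norm_mul, norm_mul]
  exact (mul_le_of_le_one_right (by positivity) (PadicInt.norm_le_one _)).trans
    (mul_le_of_le_one_left (norm_nonneg _) (PadicInt.norm_le_one _))

theorem minorNorm_eq_zero_of_lt (A : Matrix (Fin m) (Fin k) ℤ_[p]) {i : ℕ} (h : m < i) :
    minorNorm A i = 0 := by
  refine le_antisymm (minorNorm_le le_rfl fun I J => ?_) (minorNorm_nonneg A i)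
  obtain ⟨a, b, hab, hI⟩ := Fintype.exists_ne_map_eq_of_card_lt I (by simpa using h)
  rw [det_zero_of_row_eq hab (congrArg (fun l j => A l (J j)) hI), norm_zero]

theorem minorNorm_diagonal_ne_zero {a : Fin s → ℤ_[p]} (ha : ∀ i, a i ≠ 0) {i : ℕ} (h : i ≤ s) :
    minorNorm (diagonal a) i ≠ 0 := by
  have hle := norm_det_submatrix_le_minorNorm (diagonal a) (Fin.castLE h) (Fin.castLE h)
  rw [submatrix_diagonal _ _ (Fin.castLE_injective h), det_diagonal] at hle
  exact ((norm_pos_iff.2 (Finset.prod_ne_zero_iff.2 fun l _ => ha _)).trans_le hle).ne'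

end MinorNorm

section KernelCount

open Matrix Filter
open scoped ENNReal Topology

variable {p : ℕ} [Fact p.Prime]

theorem enorm_inv_eq_pow_valuation {a : ℤ_[p]} (ha : a ≠ 0) :
    ‖a‖ₑ⁻¹ = (p : ℝ≥0∞) ^ a.valuation := by
  have hp : (0 : ℝ) < p := Nat.cast_pos.2 (Fact.out : p.Prime).pos
  rw [← ofReal_norm, PadicInt.norm_eq_zpow_neg_valuation ha, _root_.zpow_neg, zpow_natCast,
    ENNReal.ofReal_inv_of_pos (by positivity), inv_inv, ENNReal.ofReal_pow hp.le,
    ENNReal.ofReal_natCast]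

theorem card_toZModPow_mul_eq_zero (a : ℤ_[p]) (n : ℕ) :
    (Nat.card {x : ZMod (p ^ n) // PadicInt.toZModPow n a * x = 0} : ℝ≥0∞) =
      min ‖a‖ₑ⁻¹ (p ^ n) := by
  rcases eq_or_ne a 0 with rfl | ha
  · simp
  have hker : ∀ x : ZMod (p ^ n), PadicInt.toZModPow n a * x = 0 ↔
      x ∈ (nsmulAddMonoidHom (p ^ a.valuation) : ZMod (p ^ n) →+ ZMod (p ^ n)).ker := fun x => by
    conv_lhs => rw [PadicInt.unitCoeff_spec ha, map_mul, mul_assoc,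
      ((PadicInt.unitCoeff ha).isUnit.map (PadicInt.toZModPow n)).mul_right_eq_zero]
    simp [AddMonoidHom.mem_ker]
  have hp : (1 : ℝ≥0∞) ≤ p := Nat.one_le_cast.2 (Fact.out : p.Prime).one_le
  rw [Nat.card_congr (Equiv.subtypeEquivRight hker),
    IsAddCyclic.card_nsmulAddMonoidHom_ker (ZMod (p ^ n)), Nat.card_zmod,
    enorm_inv_eq_pow_valuation ha]
  rcases le_total n a.valuation with h | h
  · rw [Nat.gcd_eq_left (pow_dvd_pow p h), min_eq_right (pow_le_pow_right₀ hp h), Nat.cast_pow]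
  · rw [Nat.gcd_eq_right (pow_dvd_pow p h), min_eq_left (pow_le_pow_right₀ hp h), Nat.cast_pow]

/-- The number of solutions `v` of `A v = 0` modulo `p ^ n`, divided by `p ^ (n (k - r))`, the
number of solutions when `A` is diagonal with `r` units on the diagonal and zeros elsewhere. Powers
of `p ^ n` are moved to the numerator because `k - r` may be negative. -/
noncomputable def normalizedKerCard {m k : ℕ} (A : Matrix (Fin m) (Fin k) ℤ_[p]) (r n : ℕ) :
    ℝ≥0∞ :=
  Nat.card (LinearMap.ker (A.map (PadicInt.toZModPow n)).mulVecLin) * (p ^ n) ^ r / (p ^ n) ^ k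

variable {m k r s : ℕ}

theorem normalizedKerCard_diagonal (a : Fin s → ℤ_[p]) (n : ℕ) :
    normalizedKerCard (diagonal a) s n = ∏ i, min ‖a i‖ₑ⁻¹ (p ^ n) := by
  have hp : (p : ℝ≥0∞) ≠ 0 := Nat.cast_ne_zero.2 (Fact.out : p.Prime).ne_zero
  rw [normalizedKerCard, ENNReal.mul_div_cancel_right (by simp [hp]) (by finiteness),
    diagonal_map (map_zero _), card_ker_diagonal, Nat.cast_prod]
  simp only [card_toZModPow_mul_eq_zero]

theorem normalizedKerCard_add (A : Matrix (Fin m) (Fin k) ℤ_[p]) (s t n : ℕ) :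
    normalizedKerCard A (s + t) n = normalizedKerCard A s n * (p ^ n) ^ t := by
  rw [normalizedKerCard, normalizedKerCard, pow_add, ← mul_assoc, ENNReal.mul_div_right_comm]

theorem normalizedKerCard_mul_mul_of_mul_eq_one {t : ℕ} {L : Matrix (Fin m) (Fin s) ℤ_[p]}
    {M : Matrix (Fin s) (Fin t) ℤ_[p]} {N : Matrix (Fin t) (Fin k) ℤ_[p]}
    {T : Matrix (Fin s) (Fin m) ℤ_[p]} {S : Matrix (Fin k) (Fin t) ℤ_[p]}
    (hL : T * L = 1) (hN : N * S = 1) (n : ℕ) :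
    normalizedKerCard (L * M * N) t n = normalizedKerCard M t n := by
  have hp : (p : ℝ≥0∞) ≠ 0 := Nat.cast_ne_zero.2 (Fact.out : p.Prime).ne_zero
  have hmod : ∀ {i j : ℕ} {X : Matrix (Fin i) (Fin j) ℤ_[p]} {Y : Matrix (Fin j) (Fin i) ℤ_[p]},
      X * Y = 1 → X.map (PadicInt.toZModPow n) * Y.map (PadicInt.toZModPow n) = 1 := fun h => by
    rw [← Matrix.map_mul, h, Matrix.map_one _ (map_zero _) (map_one _)]
  have hcard := congrArg (Nat.cast : ℕ → ℝ≥0∞)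
    (card_ker_mul_mul (M := M.map (PadicInt.toZModPow n)) (hmod hL) (hmod hN))
  simp only [Nat.card_zmod, Fintype.card_fin, Nat.cast_mul, Nat.cast_pow, ← Matrix.map_mul]
    at hcard
  rw [normalizedKerCard, hcard, normalizedKerCard,
    ENNReal.mul_div_cancel_right (by simp [hp]) (by finiteness),
    ENNReal.mul_div_cancel_right (by simp [hp]) (by finiteness)]

theorem exists_elementaryDivisors {A : Matrix (Fin m) (Fin k) ℤ_[p]}
    (h : minorNorm A (r + 1) = 0) :
    ∃ a : Fin r → ℤ_[p], minorNorm A r = ∏ i, ‖a i‖ ∧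
      ∀ n, normalizedKerCard A r n = ∏ i, min ‖a i‖ₑ⁻¹ (p ^ n) := by
  obtain ⟨s, a, L, N, T, S, rfl, hL, hN, ha⟩ := exists_diagonal_factorization A
  simp only [minorNorm_mul_mul_of_mul_eq_one hL hN] at h ⊢
  -- `r` may exceed the rank `s`; zeros then make up for the missing elementary divisors.
  obtain ⟨t, rfl⟩ : ∃ t, r = s + t :=
    Nat.exists_eq_add_of_le (not_lt.1 fun hlt => minorNorm_diagonal_ne_zero ha hlt h)
  refine ⟨Fin.append a 0, ?_, fun n => ?_⟩
  · rw [Fin.prod_univ_add]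
    simp only [Fin.append_left, Fin.append_right]
    rcases t.eq_zero_or_pos with rfl | ht
    · simp [minorNorm_self, norm_prod]
    · rw [minorNorm_eq_zero_of_lt _ (Nat.lt_add_of_pos_right ht)]
      simp [ht.ne']
  · rw [normalizedKerCard_add, normalizedKerCard_mul_mul_of_mul_eq_one hL hN,
      normalizedKerCard_diagonal, Fin.prod_univ_add]
    simp

theorem monotone_normalizedKerCard {A : Matrix (Fin m) (Fin k) ℤ_[p]}
    (h : minorNorm A (r + 1) = 0) : Monotone (normalizedKerCard A r) := by
  obtain ⟨a, -, hcard⟩ := exists_elementaryDivisors h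
  have hp : (1 : ℝ≥0∞) ≤ p := Nat.one_le_cast.2 (Fact.out : p.Prime).one_le
  intro n n' hn
  rw [hcard, hcard]
  gcongr

theorem tendsto_normalizedKerCard {A : Matrix (Fin m) (Fin k) ℤ_[p]}
    (h : minorNorm A (r + 1) = 0) :
    Tendsto (normalizedKerCard A r) atTop (𝓝 (ENNReal.ofReal (minorNorm A r))⁻¹) := by
  obtain ⟨a, hminor, hcard⟩ := exists_elementaryDivisors h
  have hp : (1 : ℝ≥0∞) < p := Nat.one_lt_cast.2 (Fact.out : p.Prime).one_lt
  have hinv : (ENNReal.ofReal (minorNorm A r))⁻¹ = ∏ i, ‖a i‖ₑ⁻¹ := by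
    rw [hminor, ENNReal.ofReal_prod_of_nonneg fun _ _ => norm_nonneg _,
      ENNReal.prod_inv_distrib fun _ _ _ _ _ => .inr ENNReal.ofReal_ne_top]
    simp only [ofReal_norm]
  rw [funext hcard, hinv]
  refine tendsto_finsetProd_of_ne_zero (fun i _ => ENNReal.inv_ne_zero.2 enorm_ne_top) fun i _ => ?_
  simpa using tendsto_const_nhds.min (ENNReal.tendsto_pow_atTop_nhds_top_iff.2 hp)

end KernelCount

section Integral

open Filter
open scoped ENNReal Topology

variable {p : ℕ} [Fact p.Prime]

section MonotoneConvergence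

variable {X : Type*} [MeasurableSpace X] {m k : ℕ} {A : X → Matrix (Fin m) (Fin k) ℤ_[p]}

theorem measurable_normalizedKerCard (hA : ∀ i j, Measurable fun x => A x i j) (r n : ℕ) :
    Measurable fun x => normalizedKerCard (A x) r n := by
  let F (B : Fin m → Fin k → ZMod (p ^ n)) : ℝ≥0∞ :=
    Nat.card (LinearMap.ker (Matrix.of B).mulVecLin) * (p ^ n) ^ r / (p ^ n) ^ k
  have hmod : Measurable fun x i j => PadicInt.toZModPow n (A x i j) :=
    measurable_pi_lambda _ fun i => measurable_pi_lambda _ fun j =>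
      (measurable_toZModPow n).comp (hA i j)
  exact (Measurable.of_discrete (f := F)).comp hmod

theorem tendsto_lintegral_normalizedKerCard {μ : Measure X}
    (hA : ∀ i j, Measurable fun x => A x i j) {r : ℕ}
    (hr : ∀ᵐ x ∂μ, minorNorm (A x) (r + 1) = 0) :
    Tendsto (fun n => ∫⁻ x, normalizedKerCard (A x) r n ∂μ) atTop
      (𝓝 (∫⁻ x, (ENNReal.ofReal (minorNorm (A x) r))⁻¹ ∂μ)) :=
  lintegral_tendsto_of_tendsto_of_monotone
    (fun n => (measurable_normalizedKerCard hA r n).aemeasurable)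
    (hr.mono fun _ => monotone_normalizedKerCard) (hr.mono fun _ => tendsto_normalizedKerCard)

end MonotoneConvergence

section LinearFamily

variable {rA rB rC : ℕ} (θ : (Fin rA → ℤ_[p]) →ₗ[ℤ_[p]] Matrix (Fin rC) (Fin rB) ℤ_[p])

theorem solCount_eq_sum (n : ℕ) :
    solCount p θ n = ∑ a : Fin rA → ZMod (p ^ n), Nat.card (LinearMap.ker
      ((θ fun j => ((a j).val : ℤ_[p])).map (PadicInt.toZModPow n)).mulVecLin) := by
  rw [solCount, Nat.card_congr (Equiv.subtypeProdEquivSigmaSubtype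
    fun (a : Fin rA → ZMod (p ^ n)) (b : Fin rB → ZMod (p ^ n)) => ∀ k : Fin rC,
      PadicInt.toZModPow n
        ((θ fun j => ((a j).val : ℤ_[p])).mulVec (fun j => ((b j).val : ℤ_[p])) k) = 0),
    Nat.card_sigma]
  refine Finset.sum_congr rfl fun a _ => Nat.card_congr (Equiv.subtypeEquivRight fun b => ?_)
  have hb : PadicInt.toZModPow n ∘ (fun j => ((b j).val : ℤ_[p])) = b :=
    funext fun j => by simp
  simp only [RingHom.map_mulVec, hb, LinearMap.mem_ker, Matrix.mulVecLin_apply, funext_iff,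
    Pi.zero_apply]

theorem lintegral_normalizedKerCard (r n : ℕ) :
    ∫⁻ x, normalizedKerCard (θ x) r n ∂padicHaarPi p rA =
      ENNReal.ofReal ((p : ℝ) ^ (-(n : ℤ) * ((rA : ℤ) + (rB : ℤ) - (r : ℤ))) * solCount p θ n) := by
  have hp : (0 : ℝ) < p := Nat.cast_pos.2 (Fact.out : p.Prime).pos
  have hlift : ∀ x, normalizedKerCard (θ x) r n =
      normalizedKerCard (θ fun j => ((PadicInt.toZModPow n (x j)).val : ℤ_[p])) r n := fun x => by
    rw [normalizedKerCard, linearMap_apply_map_congr (PadicInt.toZModPow n) θ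
      (y := fun j => ((PadicInt.toZModPow n (x j)).val : ℤ_[p])) (funext fun j => by simp),
      normalizedKerCard]
  calc ∫⁻ x, normalizedKerCard (θ x) r n ∂padicHaarPi p rA
      = (∑ a : Fin rA → ZMod (p ^ n), normalizedKerCard (θ fun j => ((a j).val : ℤ_[p])) r n) /
          (p ^ n) ^ rA := by
        rw [lintegral_congr hlift]
        exact lintegral_padicHaarPi_comp_toZModPow
          fun a => normalizedKerCard (θ fun j => ((a j).val : ℤ_[p])) r n
    _ = solCount p θ n * (p ^ n) ^ r / (p ^ n) ^ rB / (p ^ n) ^ rA := by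
        simp only [normalizedKerCard, div_eq_mul_inv, ← Finset.sum_mul]
        rw [solCount_eq_sum, Nat.cast_sum]
    _ = ENNReal.ofReal (solCount p θ n * (p ^ n) ^ r / (p ^ n) ^ rB / (p ^ n) ^ rA) := by
        rw [ENNReal.ofReal_div_of_pos (by positivity), ENNReal.ofReal_div_of_pos (by positivity),
          ENNReal.ofReal_mul (by positivity)]
        simp only [ENNReal.ofReal_pow, hp.le, pow_nonneg, ENNReal.ofReal_natCast]
    _ = _ := by
        congr 1
        rw [neg_mul, zpow_neg, zpow_mul, zpow_natCast, zpow_sub₀ (pow_ne_zero n hp.ne'),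
          zpow_add₀ (pow_ne_zero n hp.ne'), zpow_natCast, zpow_natCast, zpow_natCast]
        field_simp

end LinearFamily

theorem jet_count_limit_eq_integral_general (p : ℕ) [Fact p.Prime] {rA rB rC : ℕ}
    (θ : (Fin rA → ℤ_[p]) →ₗ[ℤ_[p]] Matrix (Fin rC) (Fin rB) ℤ_[p]) {r : ℕ}
    (hr : ∀ x : Fin rA → ℤ_[p], minorNorm (θ x) (r + 1) = 0) :
    Tendsto (fun n : ℕ => ENNReal.ofReal
        ((p : ℝ) ^ (-(n : ℤ) * ((rA : ℤ) + (rB : ℤ) - (r : ℤ))) * (solCount p θ n : ℝ)))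
      atTop (𝓝 (∫⁻ x, (ENNReal.ofReal (minorNorm (θ x) r))⁻¹ ∂padicHaarPi p rA)) := by
  have hθ : Continuous θ := LinearMap.continuous_on_pi θ
  simpa only [lintegral_normalizedKerCard] using
    tendsto_lintegral_normalizedKerCard (μ := padicHaarPi p rA)
      (fun i j => (hθ.matrix_elem i j).measurable) (.of_forall hr)

end Integral

/-- Let `θ : ℤ_p^{r_A} → M_{r_C × r_B}(ℤ_p)` be `ℤ_p`-linear and let
`r` be the maximum over `x` of the rank of `θ(x)` over `ℚ_p` (characterised by: all
`(r+1) × (r+1)` minors of every `θ(x)` vanish, while some `r × r` minor of some `θ(x)`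
does not).  Assume `∫_{ℤ_p^{r_A}} ‖Δ_r(x)‖⁻¹ dμ(x) < ∞` (the integrand, valued in
`[0,∞]`, is finite outside a Haar-null set).  Then
`lim_{n→∞} p^{−n(r_A + r_B − r)} · #{(a,b) : θ_n(a)·b = 0 over ℤ/p^nℤ}` exists and
equals that integral. -/
theorem jet_count_limit_eq_integral (p : ℕ) [Fact p.Prime] (rA rB rC : ℕ)
    (hA : 1 ≤ rA) (hB : 1 ≤ rB) (hC : 1 ≤ rC)
    (θ : (Fin rA → ℤ_[p]) →ₗ[ℤ_[p]] Matrix (Fin rC) (Fin rB) ℤ_[p])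
    (r : ℕ)
    (hr : ∀ x : Fin rA → ℤ_[p], minorNorm (θ x) (r + 1) = 0)
    (hr' : ∃ x : Fin rA → ℤ_[p], minorNorm (θ x) r ≠ 0)
    (hfin : ∫⁻ x, (ENNReal.ofReal (minorNorm (θ x) r))⁻¹ ∂(padicHaarPi p rA) ≠ ⊤) :
    Filter.Tendsto (fun n : ℕ =>
        (p : ℝ) ^ (-(n : ℤ) * ((rA : ℤ) + (rB : ℤ) - (r : ℤ))) * (solCount p θ n : ℝ))
      Filter.atTop
      (nhds ((∫⁻ x, (ENNReal.ofReal (minorNorm (θ x) r))⁻¹ ∂(padicHaarPi p rA)).toReal))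
    :=
  ((ENNReal.tendsto_toReal hfin).comp (jet_count_limit_eq_integral_general p θ hr)).congr
    fun _ => ENNReal.toReal_ofReal (by positivity)
end

section
/- Let g ≥ 2 and h ≥ 1 be integers and m₁, …, m_h positive integers; set d := m₁ + ⋯ + m_h. Then g·(d² + Σ_{s=1}^{h} m_s² − 2) − 2(d² − 1) − Σ_{s=2}^{h} m_s·m_{s−1} ≥ d − 1. -/
/-!
Write `Q = ∑ m_s²` and `P = ∑ m_s m_{s-1}`. Since the coefficient `d² + Q - 2` of `g` is
nonnegative, the worst case is `g = 2`, where the `d²` cancel and the claim becomes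
`d + 1 ≤ 2Q - P`. This is the sum of `d ≤ Q`, which holds term by term, and of `1 ≤ Q - P`, which
holds because `2(Q - P) = m_1² + m_h² + ∑ (m_s - m_{s-1})²`.
-/

section

open Finset

variable {R : Type*} [CommRing R] {h : ℕ}

theorem two_mul_sum_sq_sub_sum_mul_pred (m : ℕ → R) (hh : 1 ≤ h) :
    2 * ((∑ s ∈ Icc 1 h, m s ^ 2) - ∑ s ∈ Icc 2 h, m s * m (s - 1)) =
      m 1 ^ 2 + m h ^ 2 + ∑ s ∈ Icc 2 h, (m s - m (s - 1)) ^ 2 := by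
  induction h, hh using Nat.le_induction with
  | base => simp [two_mul]
  | succ n hn ih =>
    have hn' : 2 ≤ n + 1 := by lia
    rw [sum_Icc_succ_top (by lia), sum_Icc_succ_top hn', sum_Icc_succ_top hn', Nat.add_sub_cancel]
    linear_combination ih

variable [LinearOrder R] [IsStrictOrderedRing R]

theorem sq_add_sq_le_two_mul_sum_sq_sub_sum_mul_pred (m : ℕ → R) (hh : 1 ≤ h) :
    m 1 ^ 2 + m h ^ 2 ≤ 2 * ((∑ s ∈ Icc 1 h, m s ^ 2) - ∑ s ∈ Icc 2 h, m s * m (s - 1)) := by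
  rw [two_mul_sum_sq_sub_sum_mul_pred m hh]
  exact le_add_of_nonneg_right (sum_nonneg fun s _ => sq_nonneg _)

theorem sq_add_sq_le_sq_sum_add_sum_sq (m : ℕ → R) (hh : 1 ≤ h) :
    m 1 ^ 2 + m h ^ 2 ≤ (∑ s ∈ Icc 1 h, m s) ^ 2 + ∑ s ∈ Icc 1 h, m s ^ 2 := by
  obtain rfl | hlt := hh.eq_or_lt
  · simp
  · have ends_le : m 1 ^ 2 + m h ^ 2 ≤ ∑ s ∈ Icc 1 h, m s ^ 2 :=
      add_le_sum (fun s _ => sq_nonneg (m s)) (by simp [hh]) (by simp [hh]) hlt.ne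
    exact ends_le.trans (le_add_of_nonneg_left (sq_nonneg _))

theorem gloop_top_type_inequality_general {g : R} (hg : 2 ≤ g) (hh : 1 ≤ h) {m : ℕ → R}
    (hm : ∀ s ∈ Icc 1 h, m s ≤ m s ^ 2) (hfirst : 1 ≤ m 1 ^ 2) (hlast : 1 ≤ m h ^ 2) :
    (∑ s ∈ Icc 1 h, m s) - 1 ≤
      g * ((∑ s ∈ Icc 1 h, m s) ^ 2 + (∑ s ∈ Icc 1 h, m s ^ 2) - 2)
        - 2 * ((∑ s ∈ Icc 1 h, m s) ^ 2 - 1)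
        - ∑ s ∈ Icc 2 h, m s * m (s - 1) := by
  have sum_le_sum_sq : ∑ s ∈ Icc 1 h, m s ≤ ∑ s ∈ Icc 1 h, m s ^ 2 := sum_le_sum hm
  have one_le_sub : 1 ≤ (∑ s ∈ Icc 1 h, m s ^ 2) - ∑ s ∈ Icc 2 h, m s * m (s - 1) := by
    linarith [sq_add_sq_le_two_mul_sum_sq_sub_sum_mul_pred m hh]
  have coeff_nonneg : 0 ≤ (∑ s ∈ Icc 1 h, m s) ^ 2 + (∑ s ∈ Icc 1 h, m s ^ 2) - 2 := by
    linarith [sq_add_sq_le_sq_sum_add_sum_sq m hh]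
  linarith [mul_le_mul_of_nonneg_right hg coeff_nonneg]

end

/-- the arithmetic inequality in the dimension bound for top-type
strata of moment-map fibres of the `g`-loop quiver.  Let `g ≥ 2`, `h ≥ 1` and
`m₁, …, m_h` positive integers; set `d := m₁ + ⋯ + m_h`.  Then
`g·(d² + Σ_s m_s² − 2) − 2(d² − 1) − Σ_{s=2}^{h} m_s·m_{s−1} ≥ d − 1`. -/
theorem gloop_top_type_inequality (g h : ℕ) (hg : 2 ≤ g) (hh : 1 ≤ h)
    (m : ℕ → ℕ) (hm : ∀ s ∈ Finset.Icc 1 h, 1 ≤ m s)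
    (d : ℕ) (hd : d = ∑ s ∈ Finset.Icc 1 h, m s) :
    (d : ℤ) - 1 ≤
      (g : ℤ) * ((d : ℤ) ^ 2 + (∑ s ∈ Finset.Icc 1 h, (m s : ℤ) ^ 2) - 2)
        - 2 * ((d : ℤ) ^ 2 - 1)
        - ∑ s ∈ Finset.Icc 2 h, (m s : ℤ) * (m (s - 1) : ℤ) := by
  have one_le_sq (s : ℕ) (hs : s ∈ Finset.Icc 1 h) : 1 ≤ (m s : ℤ) ^ 2 :=
    one_le_pow₀ (by exact_mod_cast hm s hs)
  subst hd
  push_cast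
  exact gloop_top_type_inequality_general (by exact_mod_cast hg) hh
    (fun s _ => Int.le_self_sq _) (one_le_sq 1 (by simp [hh])) (one_le_sq h (by simp [hh]))
end
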